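/- arXiv:2304.04001 — 10 statements merged into one kernel-verified Lean document; each statement's English description precedes it below -/
import Mathlib

section
/- Suppose D ≠ 0, and let α, β ∈ ℂ be the two distinct roots of t² - (1+c)t + (c - ab) = 0, i.e. α = (1+c+√D)/2, β = (1+c-√D)/2 (complex square root when D < 0). Then for every n ≥ 1 and every x ∈ ℝ \ 𝒫, the n-th iterate satisfies f^n(x) = 1/b + ((ab - c)/b) · [ (bx - 1 + α)α^{n-1} - (bx - 1 + β)β^{n-1} ] / [ (bx - 1 + α)α^{n} - (bx - 1 + β)β^{n} ], the denominator being nonzero. -/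
/-!
The map `y ↦ (y + a) / (b * y + c)` is the projective action of `!![1, a; b, c]`, whose
characteristic polynomial is `t ^ 2 - (1 + c) * t + (c - a * b)`. Along an orbit `y`, the sequence
`u` with `u (n + 1) = (b * y n + c) * u n` therefore satisfies the linear recurrence with this
characteristic polynomial. Starting from `u 0 = α - β`, its solution is
`u n = (b * y 0 - 1 + α) * α ^ n - (b * y 0 - 1 + β) * β ^ n`, which does not vanish as long as
the orbit avoids the pole. Finally, `(y + a) / (b * y + c)` is
`1 / b + (a * b - c) / b * (1 / (b * y + c))`, and `1 / (b * y n + c)` is `u n / u (n + 1)`.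
-/

theorem ne_zero_of_succ_eq_mul {M : Type*} [Mul M] [Zero M] [NoZeroDivisors M] {u d : ℕ → M}
    {n : ℕ} (hu₀ : u 0 ≠ 0) (hd : ∀ k < n, d k ≠ 0) (hu : ∀ k < n, u (k + 1) = d k * u k) :
    u n ≠ 0 := by
  induction n with
  | zero => exact hu₀
  | succ n ih =>
    rw [hu n n.lt_succ_self]
    exact mul_ne_zero (hd n n.lt_succ_self) <|
      ih (fun k hk ↦ hd k (hk.trans n.lt_succ_self)) fun k hk ↦ hu k (hk.trans n.lt_succ_self)

section Recurrence

variable {R : Type*} [CommRing R] {a b c : R} {u y : ℕ → R} {n : ℕ}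

theorem mul_pow_add_two_sub_mul_pow_add_two (A B α β : R) (n : ℕ) :
    A * α ^ (n + 2) - B * β ^ (n + 2) =
      (α + β) * (A * α ^ (n + 1) - B * β ^ (n + 1)) - α * β * (A * α ^ n - B * β ^ n) := by
  ring

theorem recurrence_succ_eq_denom_mul
    (hu : ∀ k, u (k + 2) = (1 + c) * u (k + 1) - (c - a * b) * u k)
    (hu₁ : u 1 = (b * y 0 + c) * u 0)
    (hy : ∀ k < n, y (k + 1) * (b * y k + c) = y k + a) :
    u (n + 1) = (b * y n + c) * u n := by
  induction n with
  | zero => exact hu₁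
  | succ n ih =>
    have ih' : u (n + 1) = (b * y n + c) * u n := ih fun k hk ↦ hy k (hk.trans n.lt_succ_self)
    have hyn : y (n + 1) * (b * y n + c) = y n + a := hy n n.lt_succ_self
    rw [hu, ih']
    linear_combination (-(b * u n)) * hyn

end Recurrence

section Field

variable {K : Type*} [Field K]

theorem mul_add_ne_zero_of_ne_neg_div {b c y : K} (hb : b ≠ 0) (hy : y ≠ -c / b) :
    b * y + c ≠ 0 := by
  rwa [ne_eq, add_eq_zero_iff_eq_neg, mul_comm, ← eq_div_iff hb]

theorem add_div_mul_add_eq_partial_fraction {a b c y : K} (hb : b ≠ 0) (hy : b * y + c ≠ 0) :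
    (y + a) / (b * y + c) = 1 / b + (a * b - c) / b * (1 / (b * y + c)) := by
  rw [div_mul_div_comm, div_add_div _ _ hb (mul_ne_zero hb hy),
    div_eq_div_iff hy (mul_ne_zero hb (mul_ne_zero hb hy))]
  ring

theorem add_eq_and_mul_eq_and_ne_of_sq_eq_discrim [NeZero (2 : K)] {p q s α β : K}
    (hs : s ^ 2 = p ^ 2 - 4 * q) (hs₀ : s ≠ 0) (hα : α = (p + s) / 2) (hβ : β = (p - s) / 2) :
    α + β = p ∧ α * β = q ∧ α ≠ β := by
  have h2 : (2 : K) ≠ 0 := two_ne_zero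
  have hα' : 2 * α = p + s := by rw [hα, mul_div_cancel₀ _ h2]
  have hβ' : 2 * β = p - s := by rw [hβ, mul_div_cancel₀ _ h2]
  refine ⟨mul_left_cancel₀ h2 ?_, mul_left_cancel₀ (mul_ne_zero h2 h2) ?_, fun h ↦ ?_⟩
  · linear_combination hα' + hβ'
  · linear_combination 2 * β * hα' + (p + s) * hβ' - hs
  · exact mul_ne_zero h2 hs₀ (by linear_combination hβ' - hα' + 2 * h)

theorem orbit_eq_of_add_eq_of_mul_eq {a b c α β : K} {y : ℕ → K} {n : ℕ} (hb : b ≠ 0)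
    (hadd : α + β = 1 + c) (hmul : α * β = c - a * b) (hne : α ≠ β)
    (hy : ∀ k, y (k + 1) = (y k + a) / (b * y k + c)) (hpole : ∀ k ≤ n, b * y k + c ≠ 0) :
    (b * y 0 - 1 + α) * α ^ (n + 1) - (b * y 0 - 1 + β) * β ^ (n + 1) ≠ 0 ∧
      y (n + 1) = 1 / b + (a * b - c) / b *
        (((b * y 0 - 1 + α) * α ^ n - (b * y 0 - 1 + β) * β ^ n) /
          ((b * y 0 - 1 + α) * α ^ (n + 1) - (b * y 0 - 1 + β) * β ^ (n + 1))) := by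
  let u (k : ℕ) : K := (b * y 0 - 1 + α) * α ^ k - (b * y 0 - 1 + β) * β ^ k
  have hu₀ : u 0 ≠ 0 := by
    simpa only [u, pow_zero, mul_one, add_sub_add_left_eq_sub] using sub_ne_zero.mpr hne
  have hu₁ : u 1 = (b * y 0 + c) * u 0 := by
    simp only [u]
    linear_combination (α - β) * hadd
  have hrec (k : ℕ) : u (k + 2) = (1 + c) * u (k + 1) - (c - a * b) * u k := by
    rw [← hadd, ← hmul]
    exact mul_pow_add_two_sub_mul_pow_add_two _ _ α β k
  have hstep (k : ℕ) (hk : k ≤ n) : u (k + 1) = (b * y k + c) * u k :=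
    recurrence_succ_eq_denom_mul hrec hu₁ fun j hj ↦ by
      rw [hy, div_mul_cancel₀ _ (hpole j (hj.le.trans hk))]
  have hun (m : ℕ) (hm : m ≤ n + 1) : u m ≠ 0 :=
    ne_zero_of_succ_eq_mul hu₀ (fun k hk ↦ hpole k (by lia)) fun k hk ↦ hstep k (by lia)
  have hratio : u n / u (n + 1) = 1 / (b * y n + c) := by
    rw [hstep n le_rfl, div_mul_cancel_right₀ (hun n n.le_succ), one_div]
  refine ⟨hun (n + 1) le_rfl, ?_⟩
  change y (n + 1) = 1 / b + (a * b - c) / b * (u n / u (n + 1))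
  rw [hratio, hy, add_div_mul_add_eq_partial_fraction hb (hpole n le_rfl)]

end Field

theorem stmt1_general {K L : Type*} [Field K] [Field L] (φ : K →+* L) {a b c : K} (hb : b ≠ 0)
    {f : K → K} (hf : ∀ x, f x = (x + a) / (b * x + c)) {α β : L}
    (hadd : α + β = 1 + φ c) (hmul : α * β = φ c - φ a * φ b) (hne : α ≠ β)
    {n : ℕ} {x : K} (hx : ∀ k ≤ n, f^[k] x ≠ -c / b) :
    (φ b * φ x - 1 + α) * α ^ (n + 1) - (φ b * φ x - 1 + β) * β ^ (n + 1) ≠ 0 ∧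
      φ (f^[n + 1] x) = 1 / φ b + (φ a * φ b - φ c) / φ b *
        (((φ b * φ x - 1 + α) * α ^ n - (φ b * φ x - 1 + β) * β ^ n) /
          ((φ b * φ x - 1 + α) * α ^ (n + 1) - (φ b * φ x - 1 + β) * β ^ (n + 1))) := by
  have horbit (k : ℕ) :
      φ (f^[k + 1] x) = (φ (f^[k] x) + φ a) / (φ b * φ (f^[k] x) + φ c) := by
    rw [Function.iterate_succ_apply', hf, map_div₀, map_add, map_add, map_mul]
  have hpole (k : ℕ) (hk : k ≤ n) : φ b * φ (f^[k] x) + φ c ≠ 0 := by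
    rw [← map_mul, ← map_add]
    exact (map_ne_zero φ).mpr (mul_add_ne_zero_of_ne_neg_div hb (hx k hk))
  exact orbit_eq_of_add_eq_of_mul_eq (y := fun k ↦ φ (f^[k] x)) ((map_ne_zero φ).mpr hb)
    hadd hmul hne horbit hpole

/-- Fix `a b c : ℝ` with `b ≠ 0`, `c ≠ a*b`, `f x = (x+a)/(b*x+c)`,
`𝒫 = {x | ∃ n, f^[n] x = -c/b}`, `D = (c-1)^2 + 4*a*b`. Suppose `D ≠ 0` and let
`α = (1+c+s)/2`, `β = (1+c-s)/2 ∈ ℂ` where `s` is a (complex) square root of `D`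
(so that `α, β` are the two distinct roots of `t² - (1+c)t + (c - ab) = 0`).
Then for every `n ≥ 1` and every `x ∈ ℝ \ 𝒫` the denominator
`(b*x-1+α)*α^n - (b*x-1+β)*β^n` is nonzero and
`f^[n] x = 1/b + ((a*b-c)/b) * ((b*x-1+α)*α^(n-1) - (b*x-1+β)*β^(n-1)) /
  ((b*x-1+α)*α^n - (b*x-1+β)*β^n)`. -/
theorem stmt1 (a b c : ℝ) (hb : b ≠ 0) (hc : c ≠ a * b)
    (f : ℝ → ℝ) (hf : ∀ x, f x = (x + a) / (b * x + c))
    (P : Set ℝ) (hP : P = {x : ℝ | ∃ n : ℕ, f^[n] x = -c / b})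
    (D : ℝ) (hD : D = (c - 1) ^ 2 + 4 * a * b) (hD0 : D ≠ 0)
    (s α β : ℂ) (hs : s ^ 2 = (D : ℂ))
    (hα : α = (1 + (c : ℂ) + s) / 2) (hβ : β = (1 + (c : ℂ) - s) / 2) :
    ∀ n : ℕ, 1 ≤ n → ∀ x : ℝ, x ∉ P →
      (((b : ℂ) * x - 1 + α) * α ^ n - ((b : ℂ) * x - 1 + β) * β ^ n ≠ 0) ∧
      ((f^[n] x : ℝ) : ℂ) = 1 / (b : ℂ) + (((a : ℂ) * b - c) / b) *
        ((((b : ℂ) * x - 1 + α) * α ^ (n - 1) - ((b : ℂ) * x - 1 + β) * β ^ (n - 1)) /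
         (((b : ℂ) * x - 1 + α) * α ^ n - ((b : ℂ) * x - 1 + β) * β ^ n)) := by
  intro n hn x hx
  obtain ⟨n, rfl⟩ := Nat.exists_eq_add_of_le' hn
  have hs₀ : s ≠ 0 := by
    rintro rfl
    exact hD0 (by simpa using hs.symm)
  have hdiscrim : s ^ 2 = (1 + (c : ℂ)) ^ 2 - 4 * (c - a * b) := by
    rw [hs, hD]
    push_cast
    ring
  obtain ⟨hadd, hmul, hne⟩ := add_eq_and_mul_eq_and_ne_of_sq_eq_discrim hdiscrim hs₀ hα hβ
  exact stmt1_general Complex.ofRealHom hb hf hadd hmul hne fun k _ hk ↦ hx (hP ▸ ⟨k, hk⟩)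
end

section
/- Suppose D = 0 and set α = (1+c)/2 (the double root of t² - (1+c)t + (c - ab) = 0). Then for every n ≥ 1 and every x ∈ ℝ \ 𝒫, the n-th iterate satisfies f^n(x) = 1/b + ((ab - c)/b) · [ (bx - 1)(n - 1) + nα ] / [ α( (bx - 1)n + (n + 1)α ) ], the denominator being nonzero. -/
/-!
The map `f` is the Möbius transformation of the matrix `g = !![1, a; b, c]`, whose characteristic
polynomial `t² - (1 + c)t + (c - ab)` has the double root `α` when `D = 0`. Hence `g - α` squares to
zero, and the binomial expansion of `g ^ n = (α + (g - α)) ^ n` stops after its linear term: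
`g ^ n = α ^ n + n α ^ (n - 1) (g - α)`. On the projective line `f^[n] x` is `g ^ n • x`, and
the denominator is nonzero because this point is not `∞`.
-/

open Matrix

-- The extra factor `r` on both sides avoids the exponent `n - 1` of the binomial expansion.
theorem smul_pow_eq_of_sub_algebraMap_sq_eq_zero {R A : Type*} [CommRing R] [Ring A] [Algebra R A]
    {r : R} {a : A} (h : (a - algebraMap R A r) ^ 2 = 0) (n : ℕ) :
    r • a ^ n = r ^ n • (algebraMap R A r + (n : R) • (a - algebraMap R A r)) := by
  have hmul : (a - algebraMap R A r) * a = r • (a - algebraMap R A r) := by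
    rw [sq, mul_sub, sub_eq_zero] at h
    rw [h, ← Algebra.commutes, Algebra.smul_def]
  induction n with
  | zero => simp [Algebra.algebraMap_eq_smul_one]
  | succ n ih =>
    calc r • a ^ (n + 1)
        = r ^ n • (algebraMap R A r * a + (n : R) • ((a - algebraMap R A r) * a)) := by
          rw [pow_succ, ← smul_mul_assoc, ih, smul_mul_assoc, add_mul, smul_mul_assoc]
      _ = r ^ n • (r • a + (n : R) • r • (a - algebraMap R A r)) := by
          rw [hmul, ← Algebra.smul_def]
      _ = r ^ (n + 1) • (algebraMap R A r + ((n + 1 : ℕ) : R) • (a - algebraMap R A r)) := by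
          push_cast
          module

theorem sub_algebraMap_sq_eq_zero_of_trace_of_det {R : Type*} [CommRing R]
    {M : Matrix (Fin 2) (Fin 2) R} {r : R} (htr : M.trace = 2 * r) (hdet : M.det = r ^ 2) :
    (M - algebraMap R _ r) ^ 2 = 0 := by
  nontriviality R
  have hchar : M.charpoly = (Polynomial.X - Polynomial.C r) ^ 2 := by
    rw [charpoly_fin_two, htr, hdet]
    simp only [map_mul, map_pow, map_ofNat]
    ring
  simpa only [hchar, map_pow, map_sub, Polynomial.aeval_X, Polynomial.aeval_C]
    using M.aeval_self_charpoly

theorem apply_iterate_eq_pow_smul {G X Y : Type*} [Monoid G] [MulAction G Y] {g : G}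
    {φ : X → Y} {f : X → X} {x : X} {n : ℕ}
    (h : ∀ k < n, φ (f (f^[k] x)) = g • φ (f^[k] x)) : φ (f^[n] x) = g ^ n • φ x := by
  induction n with
  | zero => simp
  | succ n ih =>
    rw [Function.iterate_succ_apply', h n n.lt_succ_self,
      ih fun k hk => h k (hk.trans n.lt_succ_self), pow_succ', mul_smul]

section Moebius

variable {K : Type*} [Field K] [DecidableEq K] {g : GL (Fin 2) K} {x y : K}

theorem smul_coe_eq_coe_iff :
    g • (x : OnePoint K) = y ↔
      g 1 0 * x + g 1 1 ≠ 0 ∧ y = (g 0 0 * x + g 0 1) / (g 1 0 * x + g 1 1) := by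
  rw [OnePoint.smul_some_eq_ite]
  split_ifs with h
  · simp [h]
  · simp [h, eq_comm]

theorem pow_smul_coe_eq_coe_iff_of_trace_of_det {α : K} (htr : g.val.trace = 2 * α)
    (hdet : g.val.det = α ^ 2) (n : ℕ) :
    (g ^ n) • (x : OnePoint K) = y ↔
      n * (g 1 0 * x + (g 1 1 - α)) + α ≠ 0 ∧
        y = (n * ((g 0 0 - α) * x + g 0 1) + α * x) / (n * (g 1 0 * x + (g 1 1 - α)) + α) := by
  have hα : α ≠ 0 := by
    rintro rfl
    exact g.det_ne_zero (by simpa using hdet)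
  have hpow : α • (g ^ n).val =
      α ^ n • (algebraMap K _ α + (n : K) • (g.val - algebraMap K _ α)) := by
    rw [Units.val_pow_eq_pow_val]
    exact smul_pow_eq_of_sub_algebraMap_sq_eq_zero
      (sub_algebraMap_sq_eq_zero_of_trace_of_det htr hdet) n
  have hdiag (i : Fin 2) : α * (g ^ n) i i = α ^ n * (α + n * (g i i - α)) := by
    simpa [algebraMap_matrix_apply] using congr_fun₂ hpow i i
  have hoff {i j : Fin 2} (hij : i ≠ j) : α * (g ^ n) i j = α ^ n * (n * g i j) := by
    simpa [algebraMap_matrix_apply, hij] using congr_fun₂ hpow i j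
  have hnum : α * ((g ^ n) 0 0 * x + (g ^ n) 0 1) =
      α ^ n * (n * ((g 0 0 - α) * x + g 0 1) + α * x) := by
    linear_combination x * hdiag 0 + hoff zero_ne_one
  have hden : α * ((g ^ n) 1 0 * x + (g ^ n) 1 1) =
      α ^ n * (n * (g 1 0 * x + (g 1 1 - α)) + α) := by
    linear_combination x * hoff one_ne_zero + hdiag 1
  rw [smul_coe_eq_coe_iff, ← mul_div_mul_left _ _ hα, hnum, hden,
    mul_div_mul_left _ _ (pow_ne_zero n hα), ← mul_ne_zero_iff_left hα, hden]
  simp [hα]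

end Moebius

theorem iterate_moebius_of_trace_of_det {K : Type*} [Field K] {p q r s α : K} {f : K → K}
    (hf : ∀ y, f y = (p * y + q) / (r * y + s)) (htr : p + s = 2 * α)
    (hdet : p * s - q * r = α ^ 2) (hα : α ≠ 0) {n : ℕ} {x : K}
    (hx : ∀ k < n, r * f^[k] x + s ≠ 0) :
    n * (r * x + (s - α)) + α ≠ 0 ∧
      f^[n] x = (n * ((p - α) * x + q) + α * x) / (n * (r * x + (s - α)) + α) := by
  classical
  let M : Matrix (Fin 2) (Fin 2) K := !![p, q; r, s]
  have hM : M.det = α ^ 2 := (det_fin_two_of p q r s).trans hdet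
  let g : GL (Fin 2) K := GeneralLinearGroup.mkOfDetNeZero M (hM ▸ pow_ne_zero 2 hα)
  have hstep (k : ℕ) (hk : k < n) : (f (f^[k] x) : OnePoint K) = g • (f^[k] x : OnePoint K) :=
    (smul_coe_eq_coe_iff.mpr ⟨hx k hk, hf _⟩).symm
  exact (pow_smul_coe_eq_coe_iff_of_trace_of_det (g := g) ((trace_fin_two M).trans htr) hM n).mp
    (apply_iterate_eq_pow_smul hstep).symm

theorem stmt2_general {K : Type*} [Field K] {a b c : K} (hb : b ≠ 0) (hc : c ≠ a * b)
    {f : K → K} (hf : ∀ x, f x = (x + a) / (b * x + c))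
    {α : K} (hsum : 2 * α = 1 + c) (hprod : α ^ 2 = c - a * b)
    {n : ℕ} {x : K} (hx : ∀ k < n, f^[k] x ≠ -c / b) :
    (α * ((b * x - 1) * n + (n + 1) * α) ≠ 0) ∧
      f^[n] x = 1 / b + ((a * b - c) / b) *
        (((b * x - 1) * ((n : K) - 1) + n * α) /
         (α * ((b * x - 1) * n + (n + 1) * α))) := by
  have hα : α ≠ 0 := by
    rintro rfl
    exact hc (by linear_combination -hprod)
  have hpole (k : ℕ) (hk : k < n) : b * f^[k] x + c ≠ 0 := fun h =>
    hx k hk (by rw [eq_div_iff hb]; linear_combination h)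
  obtain ⟨hden, hval⟩ := iterate_moebius_of_trace_of_det (p := 1) (q := a)
    (by simpa only [one_mul] using hf) hsum.symm (by linear_combination -hprod) hα hpole
  have hden_eq : n * (b * x + (c - α)) + α = (b * x - 1) * n + (n + 1) * α := by
    linear_combination -(n : K) * hsum
  have hnum_eq : n * ((1 - α) * x + a) + α * x =
      ((b * x - 1) * n + (n + 1) * α - α * ((b * x - 1) * (n - 1) + n * α)) / b := by
    rw [eq_div_iff hb]
    linear_combination n * hprod - n * hsum
  have hab : a * b - c = -α ^ 2 := by linear_combination hprod
  rw [hden_eq] at hden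
  refine ⟨mul_ne_zero hα hden, ?_⟩
  rw [hval, hden_eq, hnum_eq, hab]
  generalize (b * x - 1) * n + (n + 1) * α = q at hden ⊢
  field

/-- Fix `a b c : ℝ` with `b ≠ 0`, `c ≠ a*b`, `f x = (x+a)/(b*x+c)`,
`𝒫 = {x | ∃ n, f^[n] x = -c/b}`, `D = (c-1)^2 + 4*a*b`. Suppose `D = 0` and set
`α = (1+c)/2` (the double root of `t² - (1+c)t + (c-ab) = 0`). Then for every `n ≥ 1`
and every `x ∈ ℝ \ 𝒫` the denominator `α*((b*x-1)*n + (n+1)*α)` is nonzero and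
`f^[n] x = 1/b + ((a*b-c)/b) * ((b*x-1)*(n-1) + n*α) / (α*((b*x-1)*n + (n+1)*α))`. -/
theorem stmt2 (a b c : ℝ) (hb : b ≠ 0) (hc : c ≠ a * b)
    (f : ℝ → ℝ) (hf : ∀ x, f x = (x + a) / (b * x + c))
    (P : Set ℝ) (hP : P = {x : ℝ | ∃ n : ℕ, f^[n] x = -c / b})
    (hD : (c - 1) ^ 2 + 4 * a * b = 0)
    (α : ℝ) (hα : α = (1 + c) / 2) :
    ∀ n : ℕ, 1 ≤ n → ∀ x : ℝ, x ∉ P →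
      (α * ((b * x - 1) * n + (n + 1) * α) ≠ 0) ∧
      f^[n] x = 1 / b + ((a * b - c) / b) *
        (((b * x - 1) * ((n : ℝ) - 1) + n * α) /
         (α * ((b * x - 1) * n + (n + 1) * α))) := by
  intro n _ x hx
  exact stmt2_general hb hc hf (by linarith) (by rw [hα]; linarith) fun k _ hk => hx (hP ▸ ⟨k, hk⟩)
end

section
/- Define sequences a_q, b_q, c_q, d_q by a₁ = 1, b₁ = a, c₁ = b, d₁ = c and a_{q+1} = a_q + b·b_q, b_{q+1} = a·a_q + c·b_q, c_{q+1} = c_q + b·d_q, d_{q+1} = a·c_q + c·d_q. Then for every q ≥ 1: (i) f^q(x) = (a_q x + b_q)/(c_q x + d_q) for all x ∈ ℝ \ 𝒫; (ii) c_q = b·K_q, d_q - a_q = (c-1)·K_q and b_q = a·K_q; (iii) if α, β ∈ ℂ are the roots of t² - (1+c)t + (c-ab) = 0, then K_q = Σ_{j=0}^{q-1} α^{q-1-j} β^{j}. -/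
/-!
Write `M` for the matrix with rows `(1, a)` and `(b, c)`. The coefficient sequences are the entries
of `M ^ q`, and `M` sends `(x, 1)` to a nonzero multiple of `(f x, 1)` whenever `x` is not the pole;
iterating gives (i). The trace and determinant of `M` are `1 + c` and `c - a * b`, so the `K q` are
the coefficients in the Cayley–Hamilton reduction `M ^ q = K q • M - r • 1`. Comparing entries
up to the scalar matrix gives (ii). Factoring the characteristic polynomial over `α` and `β` turns
the recurrence into `K (q + 1) = β ^ q + α * K q`, which gives (iii).
-/

open Finset Matrix

section LucasSequence

variable {R : Type*} [CommRing R]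

/-- The Lucas sequence of the first kind `U_q(s, p)`, whose characteristic polynomial is
`t ^ 2 - s * t + p`. It is started at `U_0 = 0`, so that the `K_q` with `q ≥ 1` of the theorem are
`U_q(1 + c, c - a * b)`. -/
def lucasU (s p : R) : ℕ → R
  | 0 => 0
  | 1 => 1
  | q + 2 => s * lucasU s p (q + 1) - p * lucasU s p q

theorem eq_lucasU_of_recurrence {u : ℕ → R} {s p : R} (h₁ : u 1 = 1) (h₂ : u 2 = s)
    (hrec : ∀ q, 1 ≤ q → u (q + 2) = s * u (q + 1) - p * u q) {q : ℕ} (hq : 1 ≤ q) :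
    u q = lucasU s p q := by
  suffices h : u q = lucasU s p q ∧ u (q + 1) = lucasU s p (q + 1) from h.1
  induction q, hq using Nat.le_induction with
  | base => simp [h₁, h₂, lucasU]
  | succ q hq ih => exact ⟨ih.2, by rw [hrec q hq, ih.1, ih.2, lucasU]⟩

theorem lucasU_add_mul_succ (α β : R) (q : ℕ) :
    lucasU (α + β) (α * β) (q + 1) = β ^ q + α * lucasU (α + β) (α * β) q := by
  induction q with
  | zero => simp [lucasU]
  | succ q ih => rw [lucasU]; linear_combination β * ih

theorem lucasU_add_mul_eq_geom_sum₂ (α β : R) (q : ℕ) :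
    lucasU (α + β) (α * β) q = ∑ j ∈ range q, α ^ (q - 1 - j) * β ^ j := by
  simp only [mul_comm (α ^ _)]
  induction q with
  | zero => simp [lucasU]
  | succ q ih => rw [lucasU_add_mul_succ, ih, Nat.add_sub_cancel, geom_sum₂_succ_eq]

theorem pow_succ_eq_lucasU_smul_sub {S : Type*} [Ring S] [Algebra R S] {x : S} {s p : R}
    (hx : x ^ 2 = s • x - p • 1) (q : ℕ) :
    x ^ (q + 1) = lucasU s p (q + 1) • x - (p * lucasU s p q) • 1 := by
  induction q with
  | zero => simp [lucasU]
  | succ q ih =>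
    calc x ^ (q + 2) = lucasU s p (q + 1) • x ^ 2 - (p * lucasU s p q) • x := by
          rw [pow_succ, ih, sub_mul, smul_mul_assoc, smul_mul_assoc, one_mul, sq]
      _ = lucasU s p (q + 2) • x - (p * lucasU s p (q + 1)) • 1 := by
          rw [hx, lucasU]; module

end LucasSequence

section TwoByTwoMatrix

theorem sq_eq_trace_smul_sub_det_smul_one {R : Type*} [CommRing R] (M : Matrix (Fin 2) (Fin 2) R) :
    M ^ 2 = M.trace • M - M.det • 1 := by
  nontriviality R
  have hcayley : M ^ 2 - M.trace • M + M.det • 1 = 0 := by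
    simpa [charpoly_fin_two, Algebra.algebraMap_eq_smul_one] using aeval_self_charpoly M
  rw [← sub_eq_zero, ← hcayley]
  abel

theorem pow_entries_eq_lucasU_mul {R : Type*} [CommRing R] (M : Matrix (Fin 2) (Fin 2) R) (q : ℕ) :
    (M ^ q) 1 0 = M 1 0 * lucasU M.trace M.det q ∧
      (M ^ q) 1 1 - (M ^ q) 0 0 = (M 1 1 - M 0 0) * lucasU M.trace M.det q ∧
      (M ^ q) 0 1 = M 0 1 * lucasU M.trace M.det q := by
  cases q with
  | zero => simp [lucasU]
  | succ q =>
    rw [pow_succ_eq_lucasU_smul_sub (sq_eq_trace_smul_sub_det_smul_one M)]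
    simp [mul_comm, mul_sub]

variable {k : Type*} [Field k]

/-- The linear fractional transformation `x ↦ (m₀₀ x + m₀₁) / (m₁₀ x + m₁₁)` of the affine line,
whose iterates the theorem computes. `M` need not be invertible, and the value at a pole is the
junk value `0`. -/
def linearFractional (M : Matrix (Fin 2) (Fin 2) k) (x : k) : k :=
  (M 0 0 * x + M 0 1) / (M 1 0 * x + M 1 1)

theorem mulVec_eq_smul_linearFractional (M : Matrix (Fin 2) (Fin 2) k) {x : k}
    (hx : M 1 0 * x + M 1 1 ≠ 0) :
    M *ᵥ ![x, 1] = (M 1 0 * x + M 1 1) • ![linearFractional M x, 1] := by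
  ext i
  fin_cases i <;> simp [mulVec, dotProduct, linearFractional, mul_div_cancel₀ _ hx]

theorem pow_mulVec_eq_smul_iterate_linearFractional (M : Matrix (Fin 2) (Fin 2) k) {x : k} {q : ℕ}
    (hx : ∀ n < q, M 1 0 * (linearFractional M)^[n] x + M 1 1 ≠ 0) :
    M ^ q *ᵥ ![x, 1] =
      (∏ n ∈ range q, (M 1 0 * (linearFractional M)^[n] x + M 1 1)) •
        ![(linearFractional M)^[q] x, 1] := by
  induction q with
  | zero => simp
  | succ q ih =>
    rw [pow_succ', ← mulVec_mulVec, ih fun n hn => hx n (hn.trans q.lt_succ_self), mulVec_smul,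
      mulVec_eq_smul_linearFractional M (hx q q.lt_succ_self), smul_smul, prod_range_succ,
      Function.iterate_succ_apply']

theorem iterate_linearFractional (M : Matrix (Fin 2) (Fin 2) k) {x : k} {q : ℕ}
    (hx : ∀ n < q, M 1 0 * (linearFractional M)^[n] x + M 1 1 ≠ 0) :
    (M ^ q) 1 0 * x + (M ^ q) 1 1 ≠ 0 ∧
      (linearFractional M)^[q] x = linearFractional (M ^ q) x := by
  have hvec := pow_mulVec_eq_smul_iterate_linearFractional M hx
  set t := ∏ n ∈ range q, (M 1 0 * (linearFractional M)^[n] x + M 1 1)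
  have ht : t ≠ 0 := prod_ne_zero_iff.mpr fun n hn => hx n (mem_range.mp hn)
  have hnum : (M ^ q) 0 0 * x + (M ^ q) 0 1 = t * (linearFractional M)^[q] x := by
    simpa [mulVec, dotProduct] using congrFun hvec 0
  have hden : (M ^ q) 1 0 * x + (M ^ q) 1 1 = t := by
    simpa [mulVec, dotProduct] using congrFun hvec 1
  exact ⟨hden ▸ ht, by rw [linearFractional, hnum, hden, mul_div_cancel_left₀ _ ht]⟩

end TwoByTwoMatrix

theorem pow_eq_of_entry_recurrence {R : Type*} [CommSemiring R] {a b c : R} {A B C D : ℕ → R}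
    (hA1 : A 1 = 1) (hB1 : B 1 = a) (hC1 : C 1 = b) (hD1 : D 1 = c)
    (hArec : ∀ q, A (q + 1) = A q + b * B q) (hBrec : ∀ q, B (q + 1) = a * A q + c * B q)
    (hCrec : ∀ q, C (q + 1) = C q + b * D q) (hDrec : ∀ q, D (q + 1) = a * C q + c * D q)
    {q : ℕ} (hq : 1 ≤ q) :
    !![1, a; b, c] ^ q = !![A q, B q; C q, D q] := by
  induction q, hq using Nat.le_induction with
  | base => rw [pow_one, hA1, hB1, hC1, hD1]
  | succ q _ ih =>
    rw [pow_succ, ih, mul_fin_two, hArec, hBrec, hCrec, hDrec]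
    simp only [mul_one, mul_comm]

theorem stmt3_general {k L : Type*} [Field k] [CommRing L] [Algebra k L] {a b c : k}
    {f : k → k} (hf : ∀ x, f x = (x + a) / (b * x + c))
    {K : ℕ → k} (hK1 : K 1 = 1) (hK2 : K 2 = 1 + c)
    (hKrec : ∀ q, K (q + 2) = (c + 1) * K (q + 1) - (c - a * b) * K q)
    {A B C D : ℕ → k}
    (hA1 : A 1 = 1) (hB1 : B 1 = a) (hC1 : C 1 = b) (hD1 : D 1 = c)
    (hArec : ∀ q, A (q + 1) = A q + b * B q) (hBrec : ∀ q, B (q + 1) = a * A q + c * B q)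
    (hCrec : ∀ q, C (q + 1) = C q + b * D q) (hDrec : ∀ q, D (q + 1) = a * C q + c * D q)
    {q : ℕ} (hq : 1 ≤ q) :
    (∀ x, (∀ n < q, b * f^[n] x + c ≠ 0) →
        C q * x + D q ≠ 0 ∧ f^[q] x = (A q * x + B q) / (C q * x + D q)) ∧
      (C q = b * K q ∧ D q - A q = (c - 1) * K q ∧ B q = a * K q) ∧
      (∀ α β : L, α + β = 1 + algebraMap k L c →
        α * β = algebraMap k L c - algebraMap k L a * algebraMap k L b →
        algebraMap k L (K q) = ∑ j ∈ range q, α ^ (q - 1 - j) * β ^ j) := by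
  have hpow : !![1, a; b, c] ^ q = !![A q, B q; C q, D q] :=
    pow_eq_of_entry_recurrence hA1 hB1 hC1 hD1 hArec hBrec hCrec hDrec hq
  refine ⟨fun x hx => ?_, ?_, fun α β hadd hmul => ?_⟩
  · obtain rfl : f = linearFractional !![1, a; b, c] := by ext x; simp [hf, linearFractional]
    have hiter := iterate_linearFractional !![1, a; b, c] hx
    rwa [hpow] at hiter
  · have hK : K q = lucasU (!![1, a; b, c]).trace (!![1, a; b, c]).det q :=
      eq_lucasU_of_recurrence hK1 (by simp [trace_fin_two, hK2])
        (fun n _ => by simp [trace_fin_two, hKrec, add_comm]) hq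
    have hentries := pow_entries_eq_lucasU_mul !![1, a; b, c] q
    rwa [hpow, ← hK] at hentries
  · rw [← lucasU_add_mul_eq_geom_sum₂]
    refine eq_lucasU_of_recurrence (u := fun n => algebraMap k L (K n)) ?_ ?_ (fun n _ => ?_) hq
    · simp [hK1]
    · simp [hK2, hadd]
    · simp [hKrec, hadd, hmul, add_comm]

/-- Fix `a b c : ℝ` with `b ≠ 0`, `c ≠ a*b`, `f x = (x+a)/(b*x+c)`,
`𝒫 = {x | ∃ n, f^[n] x = -c/b}`, and `K` defined by `K 1 = 1`, `K 2 = 1+c`,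
`K (q+2) = (c+1)*K (q+1) - (c-ab)*K q`. Define sequences `A, B, C, D` (for `a_q, b_q,
c_q, d_q`) by `A 1 = 1, B 1 = a, C 1 = b, D 1 = c` and the recurrences
`A (q+1) = A q + b*B q`, `B (q+1) = a*A q + c*B q`, `C (q+1) = C q + b*D q`,
`D (q+1) = a*C q + c*D q`. Then for every `q ≥ 1`:
(i) `f^[q] x = (A q * x + B q)/(C q * x + D q)` (with nonzero denominator) for all
`x ∈ ℝ \ 𝒫`; (ii) `C q = b*K q`, `D q - A q = (c-1)*K q`, `B q = a*K q`;
(iii) if `α, β ∈ ℂ` are the roots of `t² - (1+c)t + (c-ab) = 0` (i.e. `α + β = 1+c` and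
`α*β = c - ab`), then `K q = ∑_{j=0}^{q-1} α^(q-1-j) * β^j`. -/
theorem stmt3 (a b c : ℝ) (hb : b ≠ 0) (hc : c ≠ a * b)
    (f : ℝ → ℝ) (hf : ∀ x, f x = (x + a) / (b * x + c))
    (P : Set ℝ) (hP : P = {x : ℝ | ∃ n : ℕ, f^[n] x = -c / b})
    (K : ℕ → ℝ) (hK1 : K 1 = 1) (hK2 : K 2 = 1 + c)
    (hKrec : ∀ q : ℕ, K (q + 2) = (c + 1) * K (q + 1) - (c - a * b) * K q)
    (A B C D : ℕ → ℝ)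
    (hA1 : A 1 = 1) (hB1 : B 1 = a) (hC1 : C 1 = b) (hD1 : D 1 = c)
    (hArec : ∀ q : ℕ, A (q + 1) = A q + b * B q)
    (hBrec : ∀ q : ℕ, B (q + 1) = a * A q + c * B q)
    (hCrec : ∀ q : ℕ, C (q + 1) = C q + b * D q)
    (hDrec : ∀ q : ℕ, D (q + 1) = a * C q + c * D q) :
    ∀ q : ℕ, 1 ≤ q →
      ((∀ x : ℝ, x ∉ P →
          C q * x + D q ≠ 0 ∧ f^[q] x = (A q * x + B q) / (C q * x + D q)) ∧
       (C q = b * K q ∧ D q - A q = (c - 1) * K q ∧ B q = a * K q) ∧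
       (∀ α β : ℂ, α + β = 1 + (c : ℂ) → α * β = (c : ℂ) - a * b →
          (K q : ℂ) = ∑ j ∈ Finset.range q, α ^ (q - 1 - j) * β ^ j)) :=
  fun _ hq => (stmt3_general hf hK1 hK2 hKrec hA1 hB1 hC1 hD1 hArec hBrec hCrec hDrec hq).imp_left
    fun h x hx => h x fun n _ hn => hx <| by
      rw [hP]; exact ⟨n, (eq_div_iff hb).mpr (by linear_combination hn)⟩
end

section
/- Suppose D = 0. Then for every x ∈ ℝ \ 𝒫, the orbit converges to the unique fixed point: lim_{n→∞} f^n(x) = (1-c)/(2b). -/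
/-!
A Möbius map with vanishing discriminant has a single fixed point `p`, and the coordinate
`(z - p)⁻¹` turns it into a translation by a constant `k ≠ 0`. Its `n`-th iterate is therefore the
translation by `n * k`, that is, `z ↦ p + (z - p) / (1 + n * k * (z - p))`, which tends to `p`.
-/

open Filter Topology

/-- The parabolic Möbius map fixing `p` which acts on the coordinate `(z - p)⁻¹` as the translation
by `k`. Written without that coordinate, the formula also covers `z = p`. At the pole
`1 + k * (z - p) = 0`, division by zero gives the junk value `p`. -/
def parabolicMap {K : Type*} [Field K] (p k z : K) : K :=
  p + (z - p) / (1 + k * (z - p))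

section Field

variable {K : Type*} [Field K]

theorem one_add_mul_parabolicMap_sub {p k l z : K} (hz : 1 + l * (z - p) ≠ 0) :
    1 + k * (parabolicMap p l z - p) = (1 + (k + l) * (z - p)) / (1 + l * (z - p)) := by
  rw [parabolicMap, add_sub_cancel_left, eq_div_iff hz, add_mul, mul_assoc, div_mul_cancel₀ _ hz]
  ring

theorem parabolicMap_parabolicMap {p k l z : K} (hz : 1 + l * (z - p) ≠ 0) :
    parabolicMap p k (parabolicMap p l z) = parabolicMap p (k + l) z := by
  rw [parabolicMap, one_add_mul_parabolicMap_sub hz, parabolicMap, add_sub_cancel_left,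
    div_div_div_cancel_right₀ hz, parabolicMap]

theorem eq_parabolicMap_natCast_mul {p k : K} {u : ℕ → K}
    (hu : ∀ n, u (n + 1) = parabolicMap p k (u n)) (hpole : ∀ n, 1 + k * (u n - p) ≠ 0) (n : ℕ) :
    u n = parabolicMap p (n * k) (u 0) := by
  suffices h : 1 + n * k * (u 0 - p) ≠ 0 ∧ u n = parabolicMap p (n * k) (u 0) from h.2
  induction n with
  | zero => simp [parabolicMap]
  | succ n ih =>
    obtain ⟨hne, hun⟩ := ih
    have hsucc : ((n + 1 : ℕ) : K) * k = k + n * k := by push_cast; ring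
    have hquot := hpole n
    rw [hun, one_add_mul_parabolicMap_sub hne] at hquot
    rw [hsucc]
    exact ⟨(div_ne_zero_iff.mp hquot).1, by rw [hu, hun, parabolicMap_parabolicMap hne]⟩

theorem add_ne_zero_of_discr_eq_zero [NeZero (2 : K)] {a b c d : K} (hdet : a * d - b * c ≠ 0)
    (hdiscr : (a - d) ^ 2 + 4 * b * c = 0) : a + d ≠ 0 := by
  have hsq : (a + d) ^ 2 = 2 ^ 2 * (a * d - b * c) := by linear_combination hdiscr
  exact pow_ne_zero_iff two_ne_zero |>.mp
    (hsq ▸ mul_ne_zero (pow_ne_zero 2 (NeZero.ne 2)) hdet)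

theorem one_add_two_mul_div_mul_sub [NeZero (2 : K)] {a c d : K} (hc : c ≠ 0) (had : a + d ≠ 0)
    (z : K) :
    1 + 2 * c / (a + d) * (z - (a - d) / (2 * c)) = 2 * (c * z + d) / (a + d) := by
  have h2 : (2 : K) ≠ 0 := NeZero.ne 2
  field_simp
  ring

theorem div_eq_parabolicMap [NeZero (2 : K)] {a b c d z : K} (hc : c ≠ 0) (had : a + d ≠ 0)
    (hdiscr : (a - d) ^ 2 + 4 * b * c = 0) (hz : c * z + d ≠ 0) :
    (a * z + b) / (c * z + d) = parabolicMap ((a - d) / (2 * c)) (2 * c / (a + d)) z := by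
  have h2 : (2 : K) ≠ 0 := NeZero.ne 2
  -- `field_simp` looks for the denominator in the form `z * c + d`.
  rw [mul_comm c z] at hz
  rw [parabolicMap, one_add_two_mul_div_mul_sub hc had]
  field_simp
  linear_combination hdiscr

end Field

section Topology

variable {K : Type*} [Field K] [CharZero K] [TopologicalSpace K] [IsTopologicalDivisionRing K]
  [ContinuousSMul ℚ≥0 K]

theorem tendsto_parabolicMap_natCast_mul {k : K} (hk : k ≠ 0) (p z : K) :
    Tendsto (fun n : ℕ => parabolicMap p (n * k) z) atTop (𝓝 p) := by
  obtain rfl | hz := eq_or_ne z p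
  · simp [parabolicMap, tendsto_const_nhds]
  · have hlim : Tendsto (fun n : ℕ => (z - p + 0 * n) / (1 + k * (z - p) * n)) atTop
        (𝓝 (0 / (k * (z - p)))) :=
      tendsto_add_mul_div_add_mul_atTop_nhds _ _ _ (mul_ne_zero hk (sub_ne_zero.mpr hz))
    simpa [parabolicMap, mul_assoc, mul_comm, mul_left_comm] using hlim.const_add p

theorem stmt7_general {a b c d : K} (hc : c ≠ 0) (hdet : a * d - b * c ≠ 0)
    (hdiscr : (a - d) ^ 2 + 4 * b * c = 0) {f : K → K}
    (hf : ∀ z, f z = (a * z + b) / (c * z + d)) {x : K} (hx : ∀ n : ℕ, f^[n] x ≠ -d / c) :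
    Tendsto (fun n : ℕ => f^[n] x) atTop (𝓝 ((a - d) / (2 * c))) := by
  have had : a + d ≠ 0 := add_ne_zero_of_discr_eq_zero hdet hdiscr
  have hden (n : ℕ) : c * f^[n] x + d ≠ 0 := fun h =>
    hx n ((eq_div_iff hc).mpr (by linear_combination h))
  have horbit := eq_parabolicMap_natCast_mul (u := fun n => f^[n] x)
    (fun n => by rw [Function.iterate_succ_apply', hf, div_eq_parabolicMap hc had hdiscr (hden n)])
    (fun n => by
      rw [one_add_two_mul_div_mul_sub hc had]
      exact div_ne_zero (mul_ne_zero two_ne_zero (hden n)) had)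
  exact (tendsto_parabolicMap_natCast_mul (div_ne_zero (mul_ne_zero two_ne_zero hc) had) _ _).congr
    fun n => (horbit n).symm

end Topology

/-- Fix `a b c : ℝ` with `b ≠ 0`, `c ≠ a*b`, `f x = (x+a)/(b*x+c)`,
`𝒫 = {x | ∃ n, f^[n] x = -c/b}`. Suppose `D = (c-1)^2 + 4*a*b = 0`. Then for every
`x ∈ ℝ \ 𝒫` the orbit converges to the unique fixed point: `f^[n] x → (1-c)/(2b)`. -/
theorem stmt7 (a b c : ℝ) (hb : b ≠ 0) (hc : c ≠ a * b)
    (f : ℝ → ℝ) (hf : ∀ x, f x = (x + a) / (b * x + c))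
    (P : Set ℝ) (hP : P = {x : ℝ | ∃ n : ℕ, f^[n] x = -c / b})
    (hD : (c - 1) ^ 2 + 4 * a * b = 0) :
    ∀ x : ℝ, x ∉ P →
      Filter.Tendsto (fun n : ℕ => f^[n] x) Filter.atTop (nhds ((1 - c) / (2 * b))) := by
  subst hP
  exact fun x hx => stmt7_general hb (by rwa [one_mul, sub_ne_zero])
    (by linear_combination hD) (by simpa only [one_mul] using hf) (not_exists.mp hx)
end

section
/- Suppose D < 0 and K_q(a,b,c) ≠ 0 for every q ≥ 2. Then for every x ∈ ℝ \ 𝒫, the trajectory {f^n(x) : n ≥ 1} is dense in ℝ. -/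
/- A real Möbius map `x ↦ (p * x + q) / (r * x + s)` with `(s - p) ^ 2 + 4 * q * r < 0` fixes a
point `w` of the upper half-plane, and the Cayley transform `x ↦ (x - w) / (x - conj w)` conjugates
it to the rotation of the circle by the ratio `conj l / l` of its eigenvalues, where
`l = r * w + s`. Since `K n = (l ^ n - conj l ^ n) / (l - conj l)`, the nonvanishing of `K` says
that this ratio is not a root of unity, so the rotation has dense orbits. -/

open Complex ComplexConjugate UpperHalfPlane

section Circle

theorem denseRange_circle_pow {u : Circle} (hu : ¬IsOfFinOrder u) :
    DenseRange fun n : ℕ ↦ u ^ n := by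
  let e : UnitAddCircle ≃ₜ Circle := AddCircle.homeomorphCircle one_ne_zero
  obtain ⟨t, rfl⟩ := e.surjective u
  have e_nsmul (n : ℕ) : e (n • t) = e t ^ n := by
    simp only [e, AddCircle.homeomorphCircle_apply, AddCircle.toCircle_nsmul]
  have e_zero : e 0 = 1 := by
    simp only [e, AddCircle.homeomorphCircle_apply, AddCircle.toCircle_zero]
  have ht : addOrderOf t = 0 := by
    rw [addOrderOf_eq_zero_iff, isOfFinAddOrder_iff_nsmul_eq_zero]
    rintro ⟨n, hn, hnt⟩
    exact hu (isOfFinOrder_iff_pow_eq_one.2 ⟨n, hn, by rw [← e_nsmul, hnt, e_zero]⟩)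
  have hdense : DenseRange fun n : ℕ ↦ n • t :=
    denseRange_zsmul_iff_nsmul.1 (AddCircle.denseRange_zsmul_iff.2 ht)
  simpa only [Function.comp_def, e_nsmul] using e.surjective.denseRange.comp hdense e.continuous

theorem coe_ofConjDivSelf {z : ℂ} (hz : z ≠ 0) : (Circle.ofConjDivSelf z hz : ℂ) = conj z / z :=
  rfl

theorem isOfFinOrder_ofConjDivSelf_iff {z : ℂ} (hz : z ≠ 0) :
    IsOfFinOrder (Circle.ofConjDivSelf z hz) ↔ ∃ n : ℕ, 0 < n ∧ z ^ n = conj z ^ n := by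
  simp only [isOfFinOrder_iff_pow_eq_one, Circle.ext_iff, Circle.coe_pow, Circle.coe_one,
    coe_ofConjDivSelf, div_pow, div_eq_one_iff_eq (pow_ne_zero _ hz), eq_comm]

end Circle

theorem denseRange_of_leftInverse_of_denseRange_comp {ι X Y : Type*} [TopologicalSpace X]
    [TopologicalSpace Y] {F : X → Y} {G : Y → X} (hGF : Function.LeftInverse G F)
    (hG : ∀ x, ContinuousAt G (F x)) {s : ι → X} (hs : DenseRange (F ∘ s)) : DenseRange s := by
  intro x
  have hx := mem_closure_image (hG x) (hs (F x))
  rwa [hGF x, ← Set.range_comp, ← Function.comp_assoc, hGF.comp_eq_id, Function.id_comp] at hx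

section Cayley

theorem ofReal_sub_conj_ne_zero (w : ℍ) (x : ℝ) : (x : ℂ) - conj (w : ℂ) ≠ 0 := by
  intro h
  simpa [w.im_ne_zero] using congrArg Complex.im h

theorem upperHalfPlane_sub_conj_ne_zero (w : ℍ) : (w : ℂ) - conj (w : ℂ) ≠ 0 := by
  simp [sub_conj, w.im_ne_zero]

/-- The boundary values `x ↦ (x - w) / (x - conj w)` of the Cayley transform sending `w` to `0`,
which map the real line onto the circle without the point `1`. The numerator is the conjugate of
the denominator, whence the encoding by `Circle.ofConjDivSelf`. -/
noncomputable def boundaryCayley (w : ℍ) (x : ℝ) : Circle :=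
  Circle.ofConjDivSelf (x - conj (w : ℂ)) (ofReal_sub_conj_ne_zero w x)

theorem coe_boundaryCayley (w : ℍ) (x : ℝ) :
    (boundaryCayley w x : ℂ) = conj (x - conj (w : ℂ)) / (x - conj (w : ℂ)) :=
  coe_ofConjDivSelf _

theorem one_sub_coe_boundaryCayley (w : ℍ) (x : ℝ) :
    1 - (boundaryCayley w x : ℂ) = (w - conj (w : ℂ)) / (x - conj (w : ℂ)) := by
  rw [coe_boundaryCayley, one_sub_div (ofReal_sub_conj_ne_zero w x)]
  simp

theorem boundaryCayley_ne_one (w : ℍ) (x : ℝ) : boundaryCayley w x ≠ 1 := by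
  intro h
  have := one_sub_coe_boundaryCayley w x
  rw [h, Circle.coe_one, sub_self] at this
  exact div_ne_zero (upperHalfPlane_sub_conj_ne_zero w) (ofReal_sub_conj_ne_zero w x) this.symm

/-- The inverse of `boundaryCayley w` on the circle without the point `1`; the value at `1` is
irrelevant. Taking real parts serves only to land in `ℝ`. -/
noncomputable def boundaryCayleyInv (w : ℍ) (z : Circle) : ℝ :=
  (conj (w : ℂ) + (w - conj (w : ℂ)) / (1 - z)).re

theorem leftInverse_boundaryCayleyInv (w : ℍ) :
    Function.LeftInverse (boundaryCayleyInv w) (boundaryCayley w) := fun x ↦ by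
  rw [boundaryCayleyInv, one_sub_coe_boundaryCayley,
    div_div_cancel₀ (upperHalfPlane_sub_conj_ne_zero w), add_sub_cancel, ofReal_re]

theorem continuousAt_boundaryCayleyInv (w : ℍ) {z : Circle} (hz : z ≠ 1) :
    ContinuousAt (boundaryCayleyInv w) z := by
  have : 1 - (z : ℂ) ≠ 0 := sub_ne_zero.2 (Ne.symm (mt Circle.coe_eq_one.1 hz))
  unfold boundaryCayleyInv
  fun_prop (disch := assumption)

theorem denseRange_of_boundaryCayley_eq_pow_mul {w : ℍ} {u v : Circle} (hu : ¬IsOfFinOrder u)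
    {s : ℕ → ℝ} (hs : ∀ n, boundaryCayley w (s n) = u ^ n * v) : DenseRange s := by
  refine denseRange_of_leftInverse_of_denseRange_comp (leftInverse_boundaryCayleyInv w)
    (fun x ↦ continuousAt_boundaryCayleyInv w (boundaryCayley_ne_one w x)) ?_
  rw [Function.comp_def, funext hs]
  exact (mul_right_surjective v).denseRange.comp (denseRange_circle_pow hu)
    (continuous_mul_const v)

end Cayley

section Mobius

theorem mobius_sub_fixedPoint {k : Type*} [Field k] {p q r s v x : k}
    (hv : p * v + q = v * (r * v + s)) (hx : r * x + s ≠ 0) :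
    (p * x + q) / (r * x + s) - v = (p - r * v) * (x - v) / (r * x + s) := by
  rw [div_sub' hx]
  congr 1
  linear_combination hv

variable {p q r s : ℝ} {w : ℍ}

theorem conj_fixedPoint {w : ℂ} (hw : p * w + q = w * (r * w + s)) :
    p * conj w + q = conj w * (r * conj w + s) := by
  simpa using congrArg conj hw

-- `r * w + s` is the eigenvalue of `!![p, q; r, s]` on the eigenvector `![w, 1]`, so its sum and
-- product with its conjugate are the trace and the determinant.
theorem eigenvalue_add_conj (hw : (p * w + q : ℂ) = w * (r * w + s)) :
    (r * w + s : ℂ) + conj (r * w + s : ℂ) = p + s := by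
  refine mul_left_cancel₀ (upperHalfPlane_sub_conj_ne_zero w) ?_
  simp only [map_add, map_mul, conj_ofReal]
  linear_combination conj_fixedPoint hw - hw

theorem eigenvalue_mul_conj (hw : (p * w + q : ℂ) = w * (r * w + s)) :
    (r * w + s : ℂ) * conj (r * w + s : ℂ) = p * s - q * r := by
  linear_combination (r * w + s) * eigenvalue_add_conj hw + r * hw

theorem boundaryCayley_mobius (hw : (p * w + q : ℂ) = w * (r * w + s)) (hl : (r * w + s : ℂ) ≠ 0)
    {x : ℝ} (hx : r * x + s ≠ 0) :
    boundaryCayley w ((p * x + q) / (r * x + s)) =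
      Circle.ofConjDivSelf (r * w + s) hl * boundaryCayley w x := by
  have hx' : (r * x + s : ℂ) ≠ 0 := mod_cast hx
  have hl_eq : p - r * conj (w : ℂ) = r * w + s := by
    have := eigenvalue_add_conj hw
    simp only [map_add, map_mul, conj_ofReal] at this
    linear_combination -this
  have hsub : (((p * x + q) / (r * x + s) : ℝ) : ℂ) - conj (w : ℂ) =
      (r * w + s) * (x - conj (w : ℂ)) / (r * x + s : ℝ) := by
    push_cast
    rw [mobius_sub_fixedPoint (conj_fixedPoint hw) hx', hl_eq]
  apply Circle.ext
  rw [Circle.coe_mul, coe_boundaryCayley, coe_boundaryCayley, hsub, map_div₀, map_mul, conj_ofReal,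
    div_div_div_cancel_right₀ (ofReal_ne_zero.2 hx), mul_div_mul_comm, coe_ofConjDivSelf]

theorem boundaryCayley_iterate_mobius (hw : (p * w + q : ℂ) = w * (r * w + s))
    (hl : (r * w + s : ℂ) ≠ 0) {f : ℝ → ℝ} (hf : ∀ x, f x = (p * x + q) / (r * x + s)) {x : ℝ}
    (hx : ∀ n, r * f^[n] x + s ≠ 0) (n : ℕ) :
    boundaryCayley w (f^[n] x) =
      Circle.ofConjDivSelf (r * w + s) hl ^ n * boundaryCayley w x := by
  induction n with
  | zero => simp
  | succ n ih =>
    rw [Function.iterate_succ_apply', hf, boundaryCayley_mobius hw hl (hx n), ih, pow_succ',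
      mul_assoc]

end Mobius

theorem exists_upperHalfPlane_quadratic_eq_zero {a b c : ℝ} (h : discrim a b c < 0) :
    ∃ w : ℍ, (a * (w * w) + b * w + c : ℂ) = 0 := by
  have ha : a ≠ 0 := by
    rintro rfl
    simp [discrim, (sq_nonneg b).not_gt] at h
  obtain ⟨z, hz⟩ : ∃ z : ℂ, a * (z * z) + b * z + c = 0 :=
    exists_quadratic_eq_zero (ofReal_ne_zero.2 ha) (IsAlgClosed.exists_eq_mul_self _)
  have him : z.im ≠ 0 := by
    intro him
    obtain ⟨x, rfl⟩ : ∃ x : ℝ, (x : ℂ) = z := ⟨z.re, Complex.ext rfl him.symm⟩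
    have hx : a * (x * x) + b * x + c = 0 := mod_cast hz
    exact (sq_nonneg (2 * a * x + b)).not_gt (discrim_eq_sq_of_quadratic_eq_zero hx ▸ h)
  rcases him.lt_or_gt with hneg | hpos
  · exact ⟨⟨conj z, by simpa using hneg⟩, by simpa using congrArg conj hz⟩
  · exact ⟨⟨z, hpos⟩, hz⟩

theorem linear_recurrence_mul_sub_eq_pow_sub_pow {R : Type*} [CommRing R] {K : ℕ → R} {l m : R}
    (h1 : K 1 = 1) (h2 : K 2 = l + m)
    (hrec : ∀ n, K (n + 2) = (l + m) * K (n + 1) - l * m * K n) (n : ℕ) :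
    K (n + 1) * (l - m) = l ^ (n + 1) - m ^ (n + 1) := by
  induction n using Nat.twoStepInduction with
  | zero => simp [h1]
  | one =>
    rw [h2]
    ring
  | more n ih ih' =>
    rw [hrec]
    linear_combination (l + m) * ih' - l * m * ih

theorem pow_ne_conj_pow_of_linear_recurrence {K : ℕ → ℝ} {l : ℂ} {t d : ℝ} (hl : l.im ≠ 0)
    (ht : l + conj l = t) (hd : l * conj l = d) (h1 : K 1 = 1) (h2 : K 2 = t)
    (hrec : ∀ n, K (n + 2) = t * K (n + 1) - d * K n) (hK : ∀ n, 2 ≤ n → K n ≠ 0) {n : ℕ}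
    (hn : 0 < n) : l ^ n ≠ conj l ^ n := by
  obtain ⟨n, rfl⟩ := Nat.exists_eq_add_one.2 hn
  have hclosed := linear_recurrence_mul_sub_eq_pow_sub_pow (K := fun n ↦ (K n : ℂ)) (l := l)
    (m := conj l) (by simp [h1]) (by simp [h2, ht]) (by simp [hrec, ht, hd]) n
  have hKn : K (n + 1) ≠ 0 := by
    cases n with
    | zero => simp [h1]
    | succ n => exact hK _ (by lia)
  rw [← sub_ne_zero, ← hclosed, sub_conj]
  simp [hKn, hl]

theorem stmt8_general {p q r s : ℝ} (hD : (s - p) ^ 2 + 4 * q * r < 0) {f : ℝ → ℝ}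
    (hf : ∀ x, f x = (p * x + q) / (r * x + s)) {K : ℕ → ℝ} (hK1 : K 1 = 1) (hK2 : K 2 = p + s)
    (hKrec : ∀ n, K (n + 2) = (p + s) * K (n + 1) - (p * s - q * r) * K n)
    (hK : ∀ n, 2 ≤ n → K n ≠ 0) {x : ℝ} (hx : ∀ n, f^[n] x ≠ -s / r) :
    Dense {y : ℝ | ∃ n : ℕ, 1 ≤ n ∧ f^[n] x = y} := by
  have hr : r ≠ 0 := by
    rintro rfl
    nlinarith [sq_nonneg (s - p)]
  obtain ⟨w, hw⟩ := exists_upperHalfPlane_quadratic_eq_zero (a := r) (b := s - p) (c := -q)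
    (by rw [discrim]; linarith)
  have hfix : (p * w + q : ℂ) = w * (r * w + s) := by
    push_cast at hw
    linear_combination -hw
  have him : (r * w + s : ℂ).im ≠ 0 := by simp [hr, w.im_ne_zero]
  have hl : (r * w + s : ℂ) ≠ 0 := ne_of_apply_ne Complex.im him
  have hrot : ¬IsOfFinOrder (Circle.ofConjDivSelf (r * w + s) hl) := by
    rw [isOfFinOrder_ofConjDivSelf_iff]
    rintro ⟨n, hn, heq⟩
    exact pow_ne_conj_pow_of_linear_recurrence him (by simpa using eigenvalue_add_conj hfix)
      (by simpa using eigenvalue_mul_conj hfix) hK1 hK2 hKrec hK hn heq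
  have hden (n : ℕ) : r * f^[n] (f x) + s ≠ 0 := fun h ↦
    hx (n + 1) (by rw [Function.iterate_succ_apply, eq_div_iff hr]; linear_combination h)
  have hdense : DenseRange fun n ↦ f^[n] (f x) :=
    denseRange_of_boundaryCayley_eq_pow_mul hrot (boundaryCayley_iterate_mobius hfix hl hf hden)
  refine hdense.mono ?_
  rintro _ ⟨n, rfl⟩
  exact ⟨n + 1, n.succ_pos, rfl⟩

/-- Fix `a b c : ℝ` with `b ≠ 0`, `c ≠ a*b`, `f x = (x+a)/(b*x+c)`,
`𝒫 = {x | ∃ n, f^[n] x = -c/b}`, `D = (c-1)^2 + 4*a*b`, and `K` defined by `K 1 = 1`,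
`K 2 = 1+c`, `K (q+2) = (c+1)*K (q+1) - (c-ab)*K q`. Suppose `D < 0` and `K q ≠ 0`
for every `q ≥ 2`. Then for every `x ∈ ℝ \ 𝒫` the trajectory `{f^[n] x : n ≥ 1}`
is dense in `ℝ`. -/
theorem stmt8 (a b c : ℝ) (hb : b ≠ 0) (hc : c ≠ a * b)
    (f : ℝ → ℝ) (hf : ∀ x, f x = (x + a) / (b * x + c))
    (P : Set ℝ) (hP : P = {x : ℝ | ∃ n : ℕ, f^[n] x = -c / b})
    (hD : (c - 1) ^ 2 + 4 * a * b < 0)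
    (K : ℕ → ℝ) (hK1 : K 1 = 1) (hK2 : K 2 = 1 + c)
    (hKrec : ∀ q : ℕ, K (q + 2) = (c + 1) * K (q + 1) - (c - a * b) * K q)
    (hKq : ∀ q : ℕ, 2 ≤ q → K q ≠ 0) :
    ∀ x : ℝ, x ∉ P → Dense {y : ℝ | ∃ n : ℕ, 1 ≤ n ∧ f^[n] x = y} := by
  intro x hx
  exact stmt8_general (p := 1) hD (by simpa using hf) hK1 hK2
    (by simpa [add_comm, mul_comm] using hKrec) hKq (by simpa [hP] using hx)
end

section
/- Let θ ∈ ℝ and consider the sequence t_n = tan(nθ). (1) If θ = (s/q)π for some integers s and q ≥ 1, then the sequence is periodic: tan((n+q)θ) = tan(nθ) for every n for which both sides are defined. (2) If θ/π is irrational, then nθ is never an odd multiple of π/2 (so t_n is defined for all n ≥ 1) and the set {tan(nθ) : n ≥ 1} is dense in ℝ. -/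
/-!
Modulo a period `p`, the multiples of `θ` come back to their start when `θ / p` is rational. When
`θ / p` is irrational, the subgroup generated by `θ` is dense in the circle `ℝ / pℤ`; by compactness
the positive multiples alone accumulate at every point, and a `p`-periodic function carries this
over to its values at each of its points of continuity. For `tan` and `p = π`, the points
`arctan y` are points of continuity and their values exhaust `ℝ`.
-/

open Filter Topology

theorem apply_add_mul_eq_of_periodic {R α : Type*} [NonAssocRing R] {f : R → α} {p θ q : R} {s : ℤ}
    (hf : Function.Periodic f p) (hq : q * θ = s * p) (x : R) :
    f ((x + q) * θ) = f (x * θ) := by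
  rw [add_mul, hq]
  exact hf.int_mul s _

theorem ratCast_mul_ne_ratCast_mul_of_irrational_div {θ p : ℝ} (hθ : Irrational (θ / p)) {q : ℚ}
    (hq : q ≠ 0) (r : ℚ) : (q : ℝ) * θ ≠ r * p := by
  intro h
  have hp : p ≠ 0 := fun hp ↦ hθ.ne_zero (by rw [hp, div_zero])
  refine (hθ.ratCast_mul hq).ne_rat r ?_
  rw [← mul_div_assoc, h, mul_div_cancel_right₀ _ hp]

theorem mapClusterPt_nsmul_coe_addCircle {θ p : ℝ} [Fact (0 < p)] (hθ : Irrational (θ / p))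
    (x : AddCircle p) : MapClusterPt x atTop (fun n : ℕ ↦ n • (θ : AddCircle p)) :=
  mapClusterPt_atTop_nsmul_iff_mem_topologicalClosure_zmultiples.2
    (AddCircle.denseRange_zsmul_coe_iff.2 hθ x)

theorem mapClusterPt_natCast_mul_of_periodic {X : Type*} [TopologicalSpace X] {f : ℝ → X}
    {θ p x : ℝ} (hp : 0 < p) (hf : Function.Periodic f p) (hθ : Irrational (θ / p))
    (hx : ContinuousAt f x) : MapClusterPt (f x) atTop (fun n : ℕ ↦ f (n * θ)) := by
  have : Fact (0 < p) := ⟨hp⟩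
  have hlift : Tendsto hf.lift (𝓝 (x : AddCircle p)) (𝓝 (f x)) := by
    rw [QuotientAddGroup.nhds_eq, tendsto_map'_iff]
    exact hx
  have horbit : hf.lift ∘ (fun n : ℕ ↦ n • (θ : AddCircle p)) = fun n : ℕ ↦ f (n * θ) := by
    funext n
    rw [Function.comp_apply, ← AddCircle.coe_nsmul, nsmul_eq_mul, hf.lift_coe]
  exact horbit ▸ (mapClusterPt_nsmul_coe_addCircle hθ (x : AddCircle p)).tendsto_comp hlift

theorem mapClusterPt_tan_natCast_mul {θ : ℝ} (hθ : Irrational (θ / Real.pi)) (y : ℝ) :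
    MapClusterPt y atTop (fun n : ℕ ↦ Real.tan (n * θ)) := by
  have hy : ContinuousAt Real.tan (Real.arctan y) :=
    Real.continuousAt_tan.2 (Real.cos_arctan_pos y).ne'
  simpa only [Real.tan_arctan] using
    mapClusterPt_natCast_mul_of_periodic Real.pi_pos Real.tan_periodic hθ hy

theorem dense_image_of_forall_mapClusterPt {ι X : Type*} [TopologicalSpace X] {l : Filter ι}
    {u : ι → X} {s : Set ι} (hu : ∀ x, MapClusterPt x l u) (hs : s ∈ l) : Dense (u '' s) :=
  fun x ↦ (hu x).mem_closure_of_mem _ (image_mem_map hs)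

/-- Let `θ ∈ ℝ` and consider the sequence `t n = tan (n*θ)`.
(1) If `θ = (s/q)*π` for some integers `s` and `q ≥ 1`, then the sequence is periodic:
`tan ((n+q)*θ) = tan (n*θ)` for every `n` for which both sides are defined (i.e. neither
`n*θ` nor `(n+q)*θ` is an odd multiple of `π/2`).
(2) If `θ/π` is irrational, then `n*θ` is never an odd multiple of `π/2` for `n ≥ 1`
(so `tan (n*θ)` is defined for all `n ≥ 1`) and the set `{tan (n*θ) : n ≥ 1}` is dense
in `ℝ`. -/
theorem stmt9 (θ : ℝ) :
    ((∀ s : ℤ, ∀ q : ℕ, 1 ≤ q → θ = ((s : ℝ) / (q : ℝ)) * Real.pi →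
      ∀ n : ℕ,
        (∀ k : ℤ, (n : ℝ) * θ ≠ (2 * (k : ℝ) + 1) * (Real.pi / 2)) →
        (∀ k : ℤ, ((n : ℝ) + (q : ℝ)) * θ ≠ (2 * (k : ℝ) + 1) * (Real.pi / 2)) →
        Real.tan (((n : ℝ) + (q : ℝ)) * θ) = Real.tan ((n : ℝ) * θ)) ∧
     (Irrational (θ / Real.pi) →
        (∀ n : ℕ, 1 ≤ n → ∀ k : ℤ, (n : ℝ) * θ ≠ (2 * (k : ℝ) + 1) * (Real.pi / 2)) ∧
        Dense {y : ℝ | ∃ n : ℕ, 1 ≤ n ∧ Real.tan ((n : ℝ) * θ) = y})) := by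
  refine ⟨fun s q hq hθ n _ _ ↦ ?_, fun hθ ↦ ⟨fun n hn k ↦ ?_, ?_⟩⟩
  · have hqθ : (q : ℝ) * θ = s * Real.pi := by
      rw [hθ]
      field_simp
    exact apply_add_mul_eq_of_periodic Real.tan_periodic hqθ n
  · have hn' : (n : ℚ) ≠ 0 := Nat.cast_ne_zero.2 (Nat.one_le_iff_ne_zero.1 hn)
    have h := ratCast_mul_ne_ratCast_mul_of_irrational_div hθ hn' ((2 * k + 1) / 2)
    push_cast at h
    rwa [div_mul_eq_mul_div, mul_div_assoc] at h
  · exact dense_image_of_forall_mapClusterPt (mapClusterPt_tan_natCast_mul hθ) (Ici_mem_atTop 1)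
end

section
/- Suppose (c-1)² + 4ab = 0, set x₀ = (1-c)/(2b) and α = |(c+1)/(2b)|_p. Then every sphere of radius ρ < α centered at x₀ is invariant: for every ρ with 0 < ρ < α and every x with |x - x₀|_p = ρ, the whole forward orbit of x is well defined (never hits x̂) and |f^n(x) - x₀|_p = ρ for all n ≥ 1. In particular the open ball U_α(x₀) is a Siegel disk of f centered at x₀. -/
/-!
A Möbius map with a fixed point `x₀` satisfies
`f x - x₀ = det * (x - x₀) / ((c * x + d) * (c * x₀ + d))`, where `det = a * d - b * c`. When `x` is
closer to `x₀` than the pole is, the ultrametric inequality gives `‖c * x + d‖ = ‖c * x₀ + d‖`, so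
`f` scales the distance to `x₀` by the norm of the multiplier `det / (c * x₀ + d) ^ 2`. At a double
fixed point the multiplier is `1`, and the pole lies at distance `‖(d + a) / (2 * c)‖`.
-/

open Metric Set

section SiegelDisk

variable {X : Type*} [PseudoMetricSpace X] {f : X → X} {z x : X} {r : ℝ}

/-- The open ball of radius `r` about `z` is a Siegel disk of `f`: every sphere about `z` of smaller
radius is mapped into itself. Radius `0` is included, so for `0 < r` in a metric space the centre
is a fixed point. -/
def IsSiegelDisk (f : X → X) (z : X) (r : ℝ) : Prop :=
  ∀ ⦃ρ : ℝ⦄, ρ < r → MapsTo f (sphere z ρ) (sphere z ρ)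

theorem IsSiegelDisk.dist_iterate (hf : IsSiegelDisk f z r) (hx : x ∈ ball z r) (n : ℕ) :
    dist (f^[n] x) z = dist x z :=
  (hf hx).iterate n rfl

theorem IsSiegelDisk.mapsTo_iterate_ball (hf : IsSiegelDisk f z r) (n : ℕ) :
    MapsTo f^[n] (ball z r) (ball z r) := fun _ hx =>
  mem_ball.mpr ((hf.dist_iterate hx n).trans_lt hx)

end SiegelDisk

section Field

variable {K : Type*} [Field K] {a b c d x y : K}

/-- The Möbius map `x ↦ (a * x + b) / (c * x + d)`, as a total function on the field: at the pole
`-d / c` it takes the junk value `0`. -/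
def mobius (a b c d x : K) : K := (a * x + b) / (c * x + d)

theorem mobius_sub_mobius (hx : c * x + d ≠ 0) (hy : c * y + d ≠ 0) :
    mobius a b c d x - mobius a b c d y =
      (a * d - b * c) * (x - y) / ((c * x + d) * (c * y + d)) := by
  rw [mobius, mobius, div_sub_div _ _ hx hy]
  ring

theorem mul_double_fixed_point_add (h2 : (2 : K) ≠ 0) (hc : c ≠ 0) :
    c * ((a - d) / (2 * c)) + d = (d + a) / 2 := by
  field_simp
  ring

theorem det_eq_sq_of_discrim_eq_zero (h2 : (2 : K) ≠ 0) (hD : (d - a) ^ 2 + 4 * b * c = 0) :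
    a * d - b * c = ((d + a) / 2) ^ 2 := by
  field_simp
  linear_combination -hD

theorem mobius_double_fixed_point (h2 : (2 : K) ≠ 0) (hc : c ≠ 0) (hda : d + a ≠ 0)
    (hD : (d - a) ^ 2 + 4 * b * c = 0) :
    mobius a b c d ((a - d) / (2 * c)) = (a - d) / (2 * c) := by
  rw [mobius, mul_double_fixed_point_add h2 hc, div_eq_iff (div_ne_zero hda h2)]
  field_simp
  linear_combination hD

end Field

section NormedField

variable {K : Type*} [NormedField K] {a b c d x x₀ : K}

theorem neg_div_notMem_ball (hc : c ≠ 0) : -d / c ∉ ball x₀ ‖(c * x₀ + d) / c‖ := by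
  have pole_sub : -d / c - x₀ = -((c * x₀ + d) / c) := by
    field_simp
    ring
  rw [mem_ball_iff_norm, pole_sub, norm_neg]
  exact lt_irrefl _

variable [IsUltrametricDist K]

theorem norm_mul_add_eq_of_norm_sub_lt (h : ‖c‖ * ‖x - x₀‖ < ‖c * x₀ + d‖) :
    ‖c * x + d‖ = ‖c * x₀ + d‖ := by
  rw [← norm_mul] at h
  rw [show c * x + d = c * (x - x₀) + (c * x₀ + d) by ring,
    IsUltrametricDist.norm_add_eq_max_of_norm_ne_norm h.ne, max_eq_right h.le]

theorem norm_mobius_sub_fixed_point (hx₀ : mobius a b c d x₀ = x₀)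
    (h : ‖c‖ * ‖x - x₀‖ < ‖c * x₀ + d‖) :
    ‖mobius a b c d x - x₀‖ = ‖a * d - b * c‖ / ‖c * x₀ + d‖ ^ 2 * ‖x - x₀‖ := by
  have norm_den : ‖c * x + d‖ = ‖c * x₀ + d‖ := norm_mul_add_eq_of_norm_sub_lt h
  have den₀_pos : 0 < ‖c * x₀ + d‖ := h.trans_le' (by positivity)
  have den₀_ne : c * x₀ + d ≠ 0 := norm_pos_iff.mp den₀_pos
  have den_ne : c * x + d ≠ 0 := norm_pos_iff.mp (norm_den ▸ den₀_pos)
  calc ‖mobius a b c d x - x₀‖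
      = ‖mobius a b c d x - mobius a b c d x₀‖ := by rw [hx₀]
    _ = ‖a * d - b * c‖ * ‖x - x₀‖ / (‖c * x₀ + d‖ * ‖c * x₀ + d‖) := by
      rw [mobius_sub_mobius den_ne den₀_ne, norm_div, norm_mul, norm_mul, norm_den]
    _ = ‖a * d - b * c‖ / ‖c * x₀ + d‖ ^ 2 * ‖x - x₀‖ := by ring

theorem isSiegelDisk_mobius_of_indifferent (hc : c ≠ 0) (hx₀ : mobius a b c d x₀ = x₀)
    (hdet : ‖a * d - b * c‖ = ‖c * x₀ + d‖ ^ 2) :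
    IsSiegelDisk (mobius a b c d) x₀ ‖(c * x₀ + d) / c‖ := by
  intro ρ hρ x hx
  rw [mem_sphere_iff_norm] at hx ⊢
  have h : ‖c‖ * ‖x - x₀‖ < ‖c * x₀ + d‖ := by
    rwa [hx, ← lt_div_iff₀' (norm_pos_iff.mpr hc), ← norm_div]
  have den₀_ne : ‖c * x₀ + d‖ ≠ 0 := (h.trans_le' (by positivity)).ne'
  rw [norm_mobius_sub_fixed_point hx₀ h, hdet, div_self (pow_ne_zero 2 den₀_ne), one_mul, hx]

theorem stmt11_general {f : K → K} (hf : ∀ x, f x = (a * x + b) / (c * x + d))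
    (hD : (d - a) ^ 2 + 4 * b * c = 0) (hx₀ : x₀ = (a - d) / (2 * c))
    (hx : ‖x - x₀‖ < ‖(d + a) / (2 * c)‖) (n : ℕ) :
    f^[n] x ≠ -d / c ∧ ‖f^[n] x - x₀‖ = ‖x - x₀‖ := by
  obtain rfl : f = mobius a b c d := funext hf
  have radius_ne : (d + a) / (2 * c) ≠ 0 := norm_pos_iff.mp ((norm_nonneg _).trans_lt hx)
  obtain ⟨hda, h2c⟩ := div_ne_zero_iff.mp radius_ne
  obtain ⟨h2, hc⟩ := mul_ne_zero_iff.mp h2c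
  have den₀ : c * x₀ + d = (d + a) / 2 := hx₀ ▸ mul_double_fixed_point_add h2 hc
  have fixed : mobius a b c d x₀ = x₀ := hx₀ ▸ mobius_double_fixed_point h2 hc hda hD
  have indifferent : ‖a * d - b * c‖ = ‖c * x₀ + d‖ ^ 2 := by
    rw [det_eq_sq_of_discrim_eq_zero h2 hD, den₀, norm_pow]
  have siegel := isSiegelDisk_mobius_of_indifferent hc fixed indifferent
  have x_mem : x ∈ ball x₀ ‖(c * x₀ + d) / c‖ := by
    rwa [mem_ball_iff_norm, den₀, div_div]
  refine ⟨fun hit => neg_div_notMem_ball hc (hit ▸ siegel.mapsTo_iterate_ball n x_mem), ?_⟩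
  simpa only [dist_eq_norm] using siegel.dist_iterate x_mem n

end NormedField

/-- `ℂ_p` is modelled as a complete, algebraically closed,
nontrivially normed ultrametric field `K` which is a normed `ℚ_[p]`-algebra; its norm
`‖·‖` plays the role of `|·|_p`. Fix `a b c ∈ K` with `b ≠ 0`, `c ≠ a*b`, and let
`f x = (x+a)/(b*x+c)`, defined for `x ≠ x̂ = -c/b`. Suppose `(c-1)² + 4ab = 0`, set
`x₀ = (1-c)/(2b)` and `α = ‖(c+1)/(2b)‖`. Then every sphere of radius `ρ < α` centered
at `x₀` is invariant: for every `ρ` with `0 < ρ < α` and every `x` with `‖x - x₀‖ = ρ`,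
the whole forward orbit of `x` is well defined (never hits `x̂`) and
`‖f^[n] x - x₀‖ = ρ` for all `n ≥ 1`. In particular the open ball `U_α(x₀)` is a
Siegel disk of `f` centered at `x₀`. -/
theorem stmt11 (p : ℕ) [Fact p.Prime] (K : Type*) [NontriviallyNormedField K]
    [IsUltrametricDist K] [IsAlgClosed K] [CompleteSpace K] [NormedAlgebra ℚ_[p] K]
    (a b c : K) (hb : b ≠ 0) (hc : c ≠ a * b)
    (f : K → K) (hf : ∀ x, f x = (x + a) / (b * x + c))
    (hD : (c - 1) ^ 2 + 4 * a * b = 0)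
    (x₀ : K) (hx₀ : x₀ = (1 - c) / (2 * b))
    (α : ℝ) (hα : α = ‖(c + 1) / (2 * b)‖) :
    ∀ ρ : ℝ, 0 < ρ → ρ < α → ∀ x : K, ‖x - x₀‖ = ρ →
      (∀ n : ℕ, f^[n] x ≠ -c / b) ∧
      (∀ n : ℕ, 1 ≤ n → ‖f^[n] x - x₀‖ = ρ) := by
  rintro ρ - hρ x rfl
  have orbit := stmt11_general (a := 1) (by simpa only [one_mul] using hf) hD hx₀ (hα ▸ hρ)
  exact ⟨fun n => (orbit n).1, fun n _ => (orbit n).2⟩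
end

section
/- Suppose (c-1)² + 4ab = 0, set x₀ = (1-c)/(2b) and α = |(c+1)/(2b)|_p. Then: (i) if |x - x₀|_p > α, then f(x) is defined and |f(x) - x₀|_p = α; (ii) if |x - x₀|_p = α, x ≠ x̂, and |f(x) - x₀|_p > α, then f²(x) is defined and |f²(x) - x₀|_p = α. Hence every point outside U_α(x₀) enters the sphere S_α(x₀) after at most two iterations of f. -/
/-!
The point `x₀ = (1 - c) / (2 * b)` is the midpoint of the pole `-c / b` of `f` and of `1 / b`, its
value at infinity, so `α` is the distance from `x₀` to both; the vanishing of the discriminant says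
that `x₀` is fixed. For a fixed point, `f x - x₀ = (1 - b * x₀) * (x - x₀) / (b * x + c)`. When
`‖x - x₀‖ > α`, the triangle formed by `x`, `x₀` and the pole is isosceles, so
`‖b * x + c‖ = ‖b‖ * ‖x - x₀‖` and `‖f x - x₀‖ = ‖x₀ - 1 / b‖ = α`. Part (ii) is part (i) at `f x`.
-/

section Field

variable {K : Type*} [Field K] {a b c x x₀ : K}

-- The fixed-point equation is stated without division, so that it also covers `b * x₀ + c = 0`.
theorem linearFractional_sub_fixedPoint (hx₀ : x₀ + a = x₀ * (b * x₀ + c)) (hx : b * x + c ≠ 0) :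
    (x + a) / (b * x + c) - x₀ = (1 - b * x₀) * (x - x₀) / (b * x + c) := by
  rw [div_sub' hx]
  congr 1
  linear_combination hx₀

theorem fixedPoint_eq_of_discrim_eq_zero (h2 : (2 : K) ≠ 0) (hb : b ≠ 0)
    (hD : (c - 1) ^ 2 + 4 * a * b = 0) :
    (1 - c) / (2 * b) + a = (1 - c) / (2 * b) * (b * ((1 - c) / (2 * b)) + c) := by
  field_simp
  linear_combination hD

end Field

section Ultrametric

variable {K : Type*} [NormedField K] [IsUltrametricDist K] {a b c x x₀ : K}

theorem norm_mul_add_eq_of_norm_lt (hx : ‖b * x₀ + c‖ < ‖b * (x - x₀)‖) :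
    ‖b * x + c‖ = ‖b * (x - x₀)‖ := by
  have hsplit : b * x + c = b * (x - x₀) + (b * x₀ + c) := by ring
  rw [hsplit, IsUltrametricDist.norm_add_eq_max_of_norm_ne_norm hx.ne', max_eq_left hx.le]

theorem mul_add_ne_zero_of_norm_lt (hx : ‖b * x₀ + c‖ < ‖b * (x - x₀)‖) : b * x + c ≠ 0 := by
  rw [← norm_pos_iff, norm_mul_add_eq_of_norm_lt hx]
  exact (norm_nonneg _).trans_lt hx

theorem norm_linearFractional_sub_fixedPoint (hx₀ : x₀ + a = x₀ * (b * x₀ + c))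
    (hx : ‖b * x₀ + c‖ < ‖b * (x - x₀)‖) :
    ‖(x + a) / (b * x + c) - x₀‖ = ‖(1 - b * x₀) / b‖ := by
  have hxx₀ : x - x₀ ≠ 0 :=
    right_ne_zero_of_mul (norm_pos_iff.1 ((norm_nonneg _).trans_lt hx))
  calc ‖(x + a) / (b * x + c) - x₀‖
      = ‖(1 - b * x₀) * (x - x₀) / (b * x + c)‖ := by
        rw [linearFractional_sub_fixedPoint hx₀ (mul_add_ne_zero_of_norm_lt hx)]
    _ = ‖(1 - b * x₀) * (x - x₀) / (b * (x - x₀))‖ := by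
        rw [norm_div, norm_mul_add_eq_of_norm_lt hx, ← norm_div]
    _ = ‖(1 - b * x₀) / b‖ := by rw [mul_div_mul_right _ _ hxx₀]

theorem stmt12_general (h2 : (2 : K) ≠ 0) (hb : b ≠ 0) {f : K → K}
    (hf : ∀ x, f x = (x + a) / (b * x + c)) (hD : (c - 1) ^ 2 + 4 * a * b = 0)
    (hx₀ : x₀ = (1 - c) / (2 * b)) {α : ℝ} (hα : α = ‖(c + 1) / (2 * b)‖) (hx : α < ‖x - x₀‖) :
    x ≠ -c / b ∧ ‖f x - x₀‖ = α := by
  have hfix : x₀ + a = x₀ * (b * x₀ + c) := hx₀ ▸ fixedPoint_eq_of_discrim_eq_zero h2 hb hD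
  have hpole : b * x₀ + c = b * ((c + 1) / (2 * b)) := by
    rw [hx₀]
    field_simp
    ring
  have hinfty : (1 - b * x₀) / b = (c + 1) / (2 * b) := by
    rw [hx₀]
    field_simp
    ring
  have hlt : ‖b * x₀ + c‖ < ‖b * (x - x₀)‖ := by
    rw [hpole, norm_mul, norm_mul, ← hα]
    exact mul_lt_mul_of_pos_left hx (norm_pos_iff.2 hb)
  refine ⟨?_, by rw [hf, norm_linearFractional_sub_fixedPoint hfix hlt, hinfty, hα]⟩
  rintro rfl
  exact mul_add_ne_zero_of_norm_lt hlt (by rw [mul_div_cancel₀ _ hb, neg_add_cancel])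

end Ultrametric

/-- `ℂ_p` is modelled as a complete, algebraically closed,
nontrivially normed ultrametric field `K` which is a normed `ℚ_[p]`-algebra; its norm
`‖·‖` plays the role of `|·|_p`. Fix `a b c ∈ K` with `b ≠ 0`, `c ≠ a*b`, and let
`f x = (x+a)/(b*x+c)`, defined for `x ≠ x̂ = -c/b`. Suppose `(c-1)² + 4ab = 0`, set
`x₀ = (1-c)/(2b)` and `α = ‖(c+1)/(2b)‖`. Then:
(i) if `‖x - x₀‖ > α`, then `f x` is defined (`x ≠ x̂`) and `‖f x - x₀‖ = α`;
(ii) if `‖x - x₀‖ = α`, `x ≠ x̂`, and `‖f x - x₀‖ > α`, then `f² x` is defined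
(`f x ≠ x̂`) and `‖f (f x) - x₀‖ = α`.
Hence every point outside `U_α(x₀)` enters the sphere `S_α(x₀)` after at most two
iterations of `f`. -/
theorem stmt12 (p : ℕ) [Fact p.Prime] (K : Type*) [NontriviallyNormedField K]
    [IsUltrametricDist K] [IsAlgClosed K] [CompleteSpace K] [NormedAlgebra ℚ_[p] K]
    (a b c : K) (hb : b ≠ 0) (hc : c ≠ a * b)
    (f : K → K) (hf : ∀ x, f x = (x + a) / (b * x + c))
    (hD : (c - 1) ^ 2 + 4 * a * b = 0)
    (x₀ : K) (hx₀ : x₀ = (1 - c) / (2 * b))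
    (α : ℝ) (hα : α = ‖(c + 1) / (2 * b)‖) :
    (∀ x : K, α < ‖x - x₀‖ → x ≠ -c / b ∧ ‖f x - x₀‖ = α) ∧
    (∀ x : K, ‖x - x₀‖ = α → x ≠ -c / b → α < ‖f x - x₀‖ →
      f x ≠ -c / b ∧ ‖f (f x) - x₀‖ = α) := by
  have : CharZero K := charZero_of_injective_algebraMap (algebraMap ℚ_[p] K).injective
  have outside {x : K} := stmt12_general (x := x) two_ne_zero hb hf hD hx₀ hα
  exact ⟨fun _ ↦ outside, fun _ _ _ ↦ outside⟩
end

section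
/- Suppose (c-1)² + 4ab ≠ 0, let x₁, x₂ ∈ ℂ_p be the two distinct fixed points of f (the roots of bx² + (c-1)x - a = 0), and set α₁ = |(1 - b x₁)/b|_p and β₁ = |(b x₁ + c)/b|_p. If α₁ < β₁, then for every x ∈ ℂ_p \ (𝒫_p ∪ {x₂}) one has lim_{n→∞} f^n(x) = x₁ (i.e. the basin of attraction of x₁ contains ℂ_p \ (𝒫_p ∪ {x₂})). -/
/-!
In the coordinate `w = (x - x₁) / (x - x₂)` a Möbius map with distinct fixed points `x₁`, `x₂` is
multiplication by a constant `r`. By Vieta, the inequality between the norms at `x₁` says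
`‖r‖ < 1`, so `w` tends to `0` along every orbit that meets neither the pole nor `x₂`, and `w = 0`
is the point `x₁`.
-/

open Filter Topology

section Field

variable {K : Type*} [Field K] {a b c d x x₁ x₂ : K}

theorem mul_add_eq_sub_mul_of_roots (hx₁ : c * x₁ ^ 2 + (d - a) * x₁ - b = 0)
    (hx₂ : c * x₂ ^ 2 + (d - a) * x₂ - b = 0) (hne : x₁ ≠ x₂) :
    c * x₁ + d = a - c * x₂ := by
  apply mul_left_cancel₀ (sub_ne_zero.mpr hne)
  linear_combination hx₁ - hx₂

theorem moebius_sub_fixedPoint {y : K} (hx : c * x + d ≠ 0)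
    (hy : c * y ^ 2 + (d - a) * y - b = 0) :
    (a * x + b) / (c * x + d) - y = (a - c * y) * (x - y) / (c * x + d) := by
  rw [eq_div_iff hx, sub_mul, div_mul_cancel₀ _ hx]
  linear_combination -hy

theorem moebius_ne_fixedPoint {y : K} (hx : c * x + d ≠ 0)
    (hy : c * y ^ 2 + (d - a) * y - b = 0) (hay : a - c * y ≠ 0) (hxy : x ≠ y) :
    (a * x + b) / (c * x + d) ≠ y := by
  rw [← sub_ne_zero, moebius_sub_fixedPoint hx hy]
  exact div_ne_zero (mul_ne_zero hay (sub_ne_zero.mpr hxy)) hx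

theorem moebius_sub_div_sub (hx : c * x + d ≠ 0) (hx₁ : c * x₁ ^ 2 + (d - a) * x₁ - b = 0)
    (hx₂ : c * x₂ ^ 2 + (d - a) * x₂ - b = 0) :
    ((a * x + b) / (c * x + d) - x₁) / ((a * x + b) / (c * x + d) - x₂) =
      (a - c * x₁) / (a - c * x₂) * ((x - x₁) / (x - x₂)) := by
  rw [moebius_sub_fixedPoint hx hx₁, moebius_sub_fixedPoint hx hx₂,
    div_div_div_cancel_right₀ hx, mul_div_mul_comm]

theorem eq_div_one_sub_of_sub_div_sub_eq {w : K} (hne : x₁ ≠ x₂) (hx : x ≠ x₂)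
    (hw : (x - x₁) / (x - x₂) = w) : x = (x₁ - w * x₂) / (1 - w) := by
  have hmul : x - x₁ = w * (x - x₂) := (div_eq_iff (sub_ne_zero.mpr hx)).mp hw
  have hw₁ : 1 - w ≠ 0 := fun h => hne (by linear_combination -hmul + (x - x₂) * h)
  rw [eq_div_iff hw₁]
  linear_combination hmul

variable {f : K → K}

theorem iterate_moebius_ne_fixedPoint {y : K} (hf : ∀ x, f x = (a * x + b) / (c * x + d))
    (hx : ∀ n, c * f^[n] x + d ≠ 0) (hy : c * y ^ 2 + (d - a) * y - b = 0)
    (hay : a - c * y ≠ 0) (hxy : x ≠ y) (n : ℕ) : f^[n] x ≠ y := by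
  induction n with
  | zero => exact hxy
  | succ n ih =>
    rw [Function.iterate_succ_apply', hf]
    exact moebius_ne_fixedPoint (hx n) hy hay ih

theorem iterate_moebius_sub_div_sub (hf : ∀ x, f x = (a * x + b) / (c * x + d))
    (hx : ∀ n, c * f^[n] x + d ≠ 0) (hx₁ : c * x₁ ^ 2 + (d - a) * x₁ - b = 0)
    (hx₂ : c * x₂ ^ 2 + (d - a) * x₂ - b = 0) (n : ℕ) :
    (f^[n] x - x₁) / (f^[n] x - x₂) =
      ((a - c * x₁) / (a - c * x₂)) ^ n * ((x - x₁) / (x - x₂)) := by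
  induction n with
  | zero => rw [Function.iterate_zero_apply, pow_zero, one_mul]
  | succ n ih =>
    rw [Function.iterate_succ_apply', hf, moebius_sub_div_sub (hx n) hx₁ hx₂, ih, pow_succ',
      mul_assoc]

end Field

section TopologicalField

variable {K : Type*} [Field K] [TopologicalSpace K] [IsTopologicalDivisionRing K]
  {a b c d x x₁ x₂ : K}

theorem tendsto_of_tendsto_sub_div_sub {ι : Type*} {l : Filter ι} {u : ι → K} (hne : x₁ ≠ x₂)
    (hu : ∀ i, u i ≠ x₂) (h : Tendsto (fun i => (u i - x₁) / (u i - x₂)) l (𝓝 0)) :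
    Tendsto u l (𝓝 x₁) := by
  rw [funext fun i => eq_div_one_sub_of_sub_div_sub_eq hne (hu i) rfl]
  have hnum : Tendsto (fun i => x₁ - (u i - x₁) / (u i - x₂) * x₂) l (𝓝 x₁) := by
    simpa only [zero_mul, sub_zero] using (h.mul_const x₂).const_sub x₁
  have hden : Tendsto (fun i => 1 - (u i - x₁) / (u i - x₂)) l (𝓝 1) := by
    simpa only [sub_zero] using h.const_sub 1
  have hdiv := hnum.div hden one_ne_zero
  rw [div_one] at hdiv
  exact hdiv

theorem tendsto_iterate_moebius {f : K → K} (hf : ∀ x, f x = (a * x + b) / (c * x + d))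
    (hx : ∀ n, c * f^[n] x + d ≠ 0) (hx₁ : c * x₁ ^ 2 + (d - a) * x₁ - b = 0)
    (hx₂ : c * x₂ ^ 2 + (d - a) * x₂ - b = 0) (hne : x₁ ≠ x₂) (hax₂ : a - c * x₂ ≠ 0)
    (hr : Tendsto (fun n : ℕ => ((a - c * x₁) / (a - c * x₂)) ^ n) atTop (𝓝 0))
    (hxx₂ : x ≠ x₂) : Tendsto (fun n => f^[n] x) atTop (𝓝 x₁) := by
  apply tendsto_of_tendsto_sub_div_sub hne (iterate_moebius_ne_fixedPoint hf hx hx₂ hax₂ hxx₂)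
  simpa only [iterate_moebius_sub_div_sub hf hx hx₁ hx₂, zero_mul] using
    hr.mul_const ((x - x₁) / (x - x₂))

end TopologicalField

theorem stmt13_general {K : Type*} [NormedField K] {a b c d x x₁ x₂ : K} {f : K → K}
    (hc : c ≠ 0) (hf : ∀ x, f x = (a * x + b) / (c * x + d))
    (hx₁ : c * x₁ ^ 2 + (d - a) * x₁ - b = 0) (hx₂ : c * x₂ ^ 2 + (d - a) * x₂ - b = 0)
    (hne : x₁ ≠ x₂) (hlt : ‖(a - c * x₁) / c‖ < ‖(c * x₁ + d) / c‖)
    (hx : x ∉ {y | ∃ n : ℕ, f^[n] y = -d / c} ∪ {x₂}) :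
    Tendsto (fun n => f^[n] x) atTop (𝓝 x₁) := by
  obtain ⟨hpole, hxx₂⟩ := not_or.mp hx
  have hden : ∀ n, c * f^[n] x + d ≠ 0 := fun n h =>
    hpole ⟨n, by rw [eq_div_iff hc]; linear_combination h⟩
  rw [mul_add_eq_sub_mul_of_roots hx₁ hx₂ hne, norm_div, norm_div,
    div_lt_div_iff_of_pos_right (norm_pos_iff.mpr hc)] at hlt
  have hpos : 0 < ‖a - c * x₂‖ := (norm_nonneg _).trans_lt hlt
  have hr : ‖(a - c * x₁) / (a - c * x₂)‖ < 1 := by rwa [norm_div, div_lt_one hpos]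
  exact tendsto_iterate_moebius hf hden hx₁ hx₂ hne (norm_pos_iff.mp hpos)
    (tendsto_pow_atTop_nhds_zero_of_norm_lt_one hr) hxx₂

/-- `ℂ_p` is modelled as a complete, algebraically closed,
nontrivially normed ultrametric field `K` which is a normed `ℚ_[p]`-algebra; its norm
`‖·‖` plays the role of `|·|_p`. Fix `a b c ∈ K` with `b ≠ 0`, `c ≠ a*b`, let
`f x = (x+a)/(b*x+c)` (defined for `x ≠ x̂ = -c/b`) and
`𝒫_p = {x | ∃ n, f^[n] x = x̂}`. Suppose `(c-1)² + 4ab ≠ 0`, let `x₁ ≠ x₂` be the two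
fixed points of `f` (roots of `bx² + (c-1)x - a = 0`), and set `α₁ = ‖(1-b*x₁)/b‖`,
`β₁ = ‖(b*x₁+c)/b‖`. If `α₁ < β₁`, then for every `x ∈ K \ (𝒫_p ∪ {x₂})` one has
`f^[n] x → x₁` as `n → ∞`. -/
theorem stmt13 (p : ℕ) [Fact p.Prime] (K : Type*) [NontriviallyNormedField K]
    [IsUltrametricDist K] [IsAlgClosed K] [CompleteSpace K] [NormedAlgebra ℚ_[p] K]
    (a b c : K) (hb : b ≠ 0) (hc : c ≠ a * b)
    (f : K → K) (hf : ∀ x, f x = (x + a) / (b * x + c))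
    (P : Set K) (hP : P = {x : K | ∃ n : ℕ, f^[n] x = -c / b})
    (hD : (c - 1) ^ 2 + 4 * a * b ≠ 0)
    (x₁ x₂ : K) (hx₁ : b * x₁ ^ 2 + (c - 1) * x₁ - a = 0)
    (hx₂ : b * x₂ ^ 2 + (c - 1) * x₂ - a = 0) (hx12 : x₁ ≠ x₂)
    (α₁ β₁ : ℝ) (hα₁ : α₁ = ‖(1 - b * x₁) / b‖) (hβ₁ : β₁ = ‖(b * x₁ + c) / b‖)
    (hαβ : α₁ < β₁) :
    ∀ x : K, x ∉ P ∪ {x₂} →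
      Filter.Tendsto (fun n : ℕ => f^[n] x) Filter.atTop (nhds x₁) :=
  fun _ hx => stmt13_general hb (fun x => by rw [hf, one_mul]) hx₁ hx₂ hx12
    (hα₁ ▸ hβ₁ ▸ hαβ) (hP ▸ hx)
end

section
/- Suppose (c-1)² + 4ab ≠ 0, let x₁, x₂ ∈ ℂ_p be the two distinct fixed points of f (the roots of bx² + (c-1)x - a = 0), and set α₁ = |(1 - b x₁)/b|_p and β₁ = |(b x₁ + c)/b|_p. If α₁ > β₁, then for every x ∈ ℂ_p \ (𝒫_p ∪ {x₁}) the orbit eventually lies on the sphere S_{α₁}(x₁): there exists N such that |f^n(x) - x₁|_p = α₁ for all n ≥ N. -/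
/-!
Put `A = (1 - b x₁) / b` and `B = (b x₁ + c) / b`. Translating the fixed point `x₁` to `0` turns
`f` into `y ↦ A y / (y + B)`, where `‖B‖ < ‖A‖`. On `‖y‖ ≤ ‖B‖` this map expands norms by a factor
of at least `‖A‖ / ‖B‖ > 1`, so no orbit starting away from `0` stays there. On `‖B‖ < ‖y‖` the
denominator has norm `‖y‖`, so the image lies on the sphere of radius `‖A‖`, which is again
contained in `‖B‖ < ‖y‖`.
-/

open Filter

theorem div_sub_fixedPoint_eq {K : Type*} [Field K] {a b c x x₁ : K} (hb : b ≠ 0)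
    (hx : b * x + c ≠ 0) (hx₁ : b * x₁ ^ 2 + (c - 1) * x₁ - a = 0) :
    (x + a) / (b * x + c) - x₁ =
      (1 - b * x₁) / b * (x - x₁) / (x - x₁ + (b * x₁ + c) / b) := by
  have num_eq : x + a - x₁ * (b * x + c) = (1 - b * x₁) * (x - x₁) := by
    linear_combination -hx₁
  have den_eq : x - x₁ + (b * x₁ + c) / b = (b * x + c) / b := by
    field_simp
    ring
  rw [div_sub' hx, mul_comm _ x₁, num_eq, den_eq, ← mul_div_right_comm,
    div_div_div_cancel_right₀ hb]

section UltrametricField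

variable {K : Type*} [NormedField K] [IsUltrametricDist K]

theorem norm_mul_div_add_eq_of_norm_lt (A : K) {B y : K} (h : ‖B‖ < ‖y‖) :
    ‖A * y / (y + B)‖ = ‖A‖ := by
  have hy : ‖y‖ ≠ 0 := ((norm_nonneg B).trans_lt h).ne'
  rw [norm_div, norm_mul, IsUltrametricDist.norm_add_eq_max_of_norm_ne_norm h.ne',
    max_eq_left h.le, mul_div_cancel_right₀ _ hy]

theorem div_mul_norm_le_norm_mul_div_add (A : K) {B y : K} (hle : ‖y‖ ≤ ‖B‖)
    (hpole : y + B ≠ 0) : ‖A‖ / ‖B‖ * ‖y‖ ≤ ‖A * y / (y + B)‖ := by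
  have den_le : ‖y + B‖ ≤ ‖B‖ :=
    (IsUltrametricDist.norm_add_le_max y B).trans (max_le hle le_rfl)
  have den_pos : 0 < ‖y + B‖ := norm_pos_iff.2 hpole
  calc ‖A‖ / ‖B‖ * ‖y‖ ≤ ‖A‖ / ‖y + B‖ * ‖y‖ :=
        mul_le_mul_of_nonneg_right
          (div_le_div_of_nonneg_left (norm_nonneg A) den_pos den_le) (norm_nonneg y)
    _ = ‖A * y / (y + B)‖ := by rw [norm_div, norm_mul, mul_div_right_comm]

theorem exists_norm_lt_of_mul_div_add_orbit {A B : K} (hAB : ‖B‖ < ‖A‖) {y : ℕ → K}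
    (hy₀ : y 0 ≠ 0) (hpole : ∀ n, y n + B ≠ 0)
    (hy : ∀ n, y (n + 1) = A * y n / (y n + B)) : ∃ n, ‖B‖ < ‖y n‖ := by
  by_contra! hle
  have B_pos : 0 < ‖B‖ := (norm_pos_iff.2 hy₀).trans_le (hle 0)
  have expands (n : ℕ) : ‖A‖ / ‖B‖ * ‖y n‖ ≤ ‖y (n + 1)‖ :=
    hy n ▸ div_mul_norm_le_norm_mul_div_add A (hle n) (hpole n)
  have diverges : Tendsto (fun n => ‖y n‖) atTop atTop :=
    tendsto_atTop_of_geom_le (norm_pos_iff.2 hy₀) ((one_lt_div B_pos).2 hAB) expands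
  obtain ⟨n, hn⟩ := (diverges.eventually_gt_atTop ‖B‖).exists
  exact (hle n).not_gt hn

theorem eventually_norm_eq_of_mul_div_add_orbit {A B : K} (hAB : ‖B‖ < ‖A‖) {y : ℕ → K}
    (hy₀ : y 0 ≠ 0) (hpole : ∀ n, y n + B ≠ 0)
    (hy : ∀ n, y (n + 1) = A * y n / (y n + B)) : ∀ᶠ n in atTop, ‖y n‖ = ‖A‖ := by
  have norm_succ {n : ℕ} (hn : ‖B‖ < ‖y n‖) : ‖y (n + 1)‖ = ‖A‖ :=
    hy n ▸ norm_mul_div_add_eq_of_norm_lt A hn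
  obtain ⟨m, hm⟩ := exists_norm_lt_of_mul_div_add_orbit hAB hy₀ hpole hy
  filter_upwards [eventually_ge_atTop (m + 1)] with n hn
  induction n, hn using Nat.le_induction with
  | base => exact norm_succ hm
  | succ n _ ih => exact norm_succ (hAB.trans_eq ih.symm)

theorem stmt14_general {a b c x₁ x : K} {f : K → K} (hb : b ≠ 0)
    (hf : ∀ z, f z = (z + a) / (b * z + c)) (hx₁ : b * x₁ ^ 2 + (c - 1) * x₁ - a = 0)
    (hαβ : ‖(b * x₁ + c) / b‖ < ‖(1 - b * x₁) / b‖) (hx : x ≠ x₁)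
    (hpole : ∀ n, f^[n] x ≠ -c / b) :
    ∀ᶠ n in atTop, ‖f^[n] x - x₁‖ = ‖(1 - b * x₁) / b‖ := by
  have den_ne (n : ℕ) : b * f^[n] x + c ≠ 0 := fun h =>
    hpole n (by rw [eq_div_iff hb]; linear_combination h)
  refine eventually_norm_eq_of_mul_div_add_orbit (y := fun n => f^[n] x - x₁) hαβ
    (sub_ne_zero.2 hx) (fun n h => hpole n ?_) (fun n => ?_)
  · linear_combination h - x₁ * mul_inv_cancel₀ hb
  · rw [Function.iterate_succ_apply', hf, div_sub_fixedPoint_eq hb (den_ne n) hx₁]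

end UltrametricField

/-- `ℂ_p` is modelled as a complete, algebraically closed,
nontrivially normed ultrametric field `K` which is a normed `ℚ_[p]`-algebra; its norm
`‖·‖` plays the role of `|·|_p`. Fix `a b c ∈ K` with `b ≠ 0`, `c ≠ a*b`, let
`f x = (x+a)/(b*x+c)` (defined for `x ≠ x̂ = -c/b`) and
`𝒫_p = {x | ∃ n, f^[n] x = x̂}`. Suppose `(c-1)² + 4ab ≠ 0`, let `x₁ ≠ x₂` be the two
fixed points of `f` (roots of `bx² + (c-1)x - a = 0`), and set `α₁ = ‖(1-b*x₁)/b‖`,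
`β₁ = ‖(b*x₁+c)/b‖`. If `α₁ > β₁`, then for every `x ∈ K \ (𝒫_p ∪ {x₁})` the orbit
eventually lies on the sphere `S_{α₁}(x₁)`: there exists `N` such that
`‖f^[n] x - x₁‖ = α₁` for all `n ≥ N`. -/
theorem stmt14 (p : ℕ) [Fact p.Prime] (K : Type*) [NontriviallyNormedField K]
    [IsUltrametricDist K] [IsAlgClosed K] [CompleteSpace K] [NormedAlgebra ℚ_[p] K]
    (a b c : K) (hb : b ≠ 0) (hc : c ≠ a * b)
    (f : K → K) (hf : ∀ x, f x = (x + a) / (b * x + c))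
    (P : Set K) (hP : P = {x : K | ∃ n : ℕ, f^[n] x = -c / b})
    (hD : (c - 1) ^ 2 + 4 * a * b ≠ 0)
    (x₁ x₂ : K) (hx₁ : b * x₁ ^ 2 + (c - 1) * x₁ - a = 0)
    (hx₂ : b * x₂ ^ 2 + (c - 1) * x₂ - a = 0) (hx12 : x₁ ≠ x₂)
    (α₁ β₁ : ℝ) (hα₁ : α₁ = ‖(1 - b * x₁) / b‖) (hβ₁ : β₁ = ‖(b * x₁ + c) / b‖)
    (hαβ : β₁ < α₁) :
    ∀ x : K, x ∉ P ∪ {x₁} →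
      ∃ N : ℕ, ∀ n : ℕ, N ≤ n → ‖f^[n] x - x₁‖ = α₁ := by
  subst hP hα₁ hβ₁
  exact fun x hx => eventually_atTop.1 <| stmt14_general hb hf hx₁ hαβ
    (fun h => hx (.inr h)) fun n h => hx (.inl ⟨n, h⟩)
end
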